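/- arXiv:2209.06657 — 3 statements merged into one kernel-verified Lean document; each statement's English description precedes it below -/
import Mathlib

section
/- Let V be a real reflexive Banach space and let A : V → V* be a bounded operator, i.e. A maps bounded subsets of V to bounded subsets of V*. Then A is pseudo-monotone if and only if the following holds: for every sequence {u_m} converging weakly in V to some u with liminf_{m→∞} ⟨A(u_m), u_m − u⟩ ≥ 0, one has that A(u_m) converges to A(u) in the weak-star topology of V* and lim_{m→∞} ⟨A(u_m), u_m⟩ = ⟨A(u), u⟩. -/
open Filter Topology

/-- Weak convergence of a sequence in a normed space `V`: convergence tested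
against every continuous linear functional. -/
def WeaklyConvergesTo {V : Type*} [NormedAddCommGroup V] [NormedSpace ℝ V]
    (u : ℕ → V) (u₀ : V) : Prop :=
  ∀ f : StrongDual ℝ V, Tendsto (fun m => f (u m)) atTop (𝓝 (f u₀))

/-- An operator `A : V → V*` is pseudo-monotone if for every sequence `{u_m}`
converging weakly to `u` in `V` with `liminf ⟨A(u_m), u_m − u⟩ ≥ 0`, one has
`limsup ⟨A(u_m), u_m − v⟩ ≤ ⟨A(u), u − v⟩` for every `v ∈ V`. -/
def PseudoMonotone {V : Type*} [NormedAddCommGroup V] [NormedSpace ℝ V]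
    (A : V → StrongDual ℝ V) : Prop :=
  ∀ (u : ℕ → V) (u₀ : V), WeaklyConvergesTo u u₀ →
    0 ≤ liminf (fun m => A (u m) (u m - u₀)) atTop →
    ∀ v : V, limsup (fun m => A (u m) (u m - v)) atTop ≤ A u₀ (u₀ - v)

/-!
The dual `V*` is complete, so Banach–Steinhaus applied to the evaluation functionals at `u m`
bounds every weakly convergent sequence `u m ⇀ u₀`, and with it `A (u m)`. Taking `v = u₀` in the
definition of pseudo-monotonicity gives `⟨A (u m), u m - u₀⟩ → 0`. Taking `v = u₀ - w` and
subtracting this null sequence gives `limsup ⟨A (u m), w⟩ ≤ ⟨A u₀, w⟩` for every `w`; the same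
bound at `-w` controls the `liminf` from below.
-/

theorem isBounded_of_forall_isBounded_dual_image (𝕜 : Type*) [RCLike 𝕜] {E : Type*}
    [SeminormedAddCommGroup E] [NormedSpace 𝕜 E] {s : Set E}
    (hs : ∀ f : StrongDual 𝕜 E, Bornology.IsBounded (f '' s)) : Bornology.IsBounded s := by
  have pointwise_bound (f : StrongDual 𝕜 E) :
      ∃ C, ∀ x : s, ‖NormedSpace.inclusionInDoubleDual 𝕜 E x f‖ ≤ C := by
    obtain ⟨C, hC⟩ := (hs f).exists_norm_le
    exact ⟨C, fun x => hC _ (Set.mem_image_of_mem f x.2)⟩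
  obtain ⟨C, hC⟩ := banach_steinhaus pointwise_bound
  refine isBounded_iff_forall_norm_le.2 ⟨C, fun x hx => ?_⟩
  calc ‖x‖ = ‖NormedSpace.inclusionInDoubleDual 𝕜 E x‖ :=
        ((NormedSpace.inclusionInDoubleDualLi 𝕜).norm_map x).symm
    _ ≤ C := hC ⟨x, hx⟩

theorem WeaklyConvergesTo.isBounded_range {V : Type*} [NormedAddCommGroup V] [NormedSpace ℝ V]
    {u : ℕ → V} {u₀ : V} (hu : WeaklyConvergesTo u u₀) : Bornology.IsBounded (Set.range u) := by
  refine isBounded_of_forall_isBounded_dual_image ℝ fun f => ?_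
  rw [← Set.range_comp]
  exact Metric.isBounded_range_of_tendsto _ (hu f)

theorem isBounded_range_clm_apply {𝕜 E F ι : Type*} [NontriviallyNormedField 𝕜]
    [SeminormedAddCommGroup E] [NormedSpace 𝕜 E] [SeminormedAddCommGroup F] [NormedSpace 𝕜 F]
    {f : ι → E →L[𝕜] F} {x : ι → E} (hf : Bornology.IsBounded (Set.range f))
    (hx : Bornology.IsBounded (Set.range x)) :
    Bornology.IsBounded (Set.range fun i => f i (x i)) := by
  obtain ⟨C, hC⟩ := hf.exists_norm_le
  obtain ⟨D, hD⟩ := hx.exists_norm_le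
  refine isBounded_iff_forall_norm_le.2 ⟨C * D, Set.forall_mem_range.2 fun i => ?_⟩
  exact (f i).le_of_opNorm_le_of_le (hC _ (Set.mem_range_self i)) (hD _ (Set.mem_range_self i))

section AdditiveFunctionals

variable {ι E F : Type*} [AddCommGroup E] [FunLike F E ℝ] [AddMonoidHomClass F E ℝ]
  {l : Filter ι} {f : ι → F} {g : F}

theorem tendsto_apply_of_forall_eventually_lt
    (h : ∀ w b, g w < b → ∀ᶠ i in l, f i w < b) (w : E) :
    Tendsto (fun i => f i w) l (𝓝 (g w)) := by
  refine tendsto_order.2 ⟨fun b hb => ?_, h w⟩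
  have neg_lt : g (-w) < -b := by rwa [map_neg, neg_lt_neg_iff]
  filter_upwards [h (-w) (-b) neg_lt] with i hi
  rwa [map_neg, neg_lt_neg_iff] at hi

variable {x : ι → E} {x₀ : E}

theorem tendsto_apply_of_forall_limsup_apply_sub_le
    (hbdd : ∀ v, IsBoundedUnder (· ≤ ·) l fun i => f i (x i - v))
    (hzero : Tendsto (fun i => f i (x i - x₀)) l (𝓝 0))
    (hlimsup : ∀ v, limsup (fun i => f i (x i - v)) l ≤ g (x₀ - v)) (w : E) :
    Tendsto (fun i => f i w) l (𝓝 (g w)) := by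
  refine tendsto_apply_of_forall_eventually_lt (fun w b hb => ?_) w
  obtain ⟨c, hgc, hcb⟩ := exists_between hb
  have limsup_lt : limsup (fun i => f i (x i - (x₀ - w))) l < c :=
    (hlimsup (x₀ - w)).trans_lt (by rwa [sub_sub_cancel])
  filter_upwards [eventually_lt_of_limsup_lt limsup_lt (hbdd _),
    hzero.eventually_const_lt (sub_neg.2 hcb)] with i hlt hgt
  have decomp : f i w = f i (x i - (x₀ - w)) - f i (x i - x₀) := by
    rw [← map_sub]; congr 1; abel
  linarith

end AdditiveFunctionals

section PseudoMonotone

variable {V : Type*} [NormedAddCommGroup V] [NormedSpace ℝ V] {A : V → StrongDual ℝ V}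

theorem WeaklyConvergesTo.isBounded_range_apply_sub {u : ℕ → V} {u₀ : V}
    (hu : WeaklyConvergesTo u u₀)
    (hbdd : ∀ s : Set V, Bornology.IsBounded s → Bornology.IsBounded (A '' s)) (v : V) :
    Bornology.IsBounded (Set.range fun m => A (u m) (u m - v)) := by
  refine isBounded_range_clm_apply ?_ ?_
  · rw [Set.range_comp' A u]
    exact hbdd _ hu.isBounded_range
  · refine (hu.isBounded_range.sub (Bornology.isBounded_singleton (x := v))).subset ?_
    exact Set.range_subset_iff.2 fun m =>
      Set.sub_mem_sub (Set.mem_range_self m) (Set.mem_singleton v)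

theorem PseudoMonotone.tendsto_apply_sub_zero {u : ℕ → V} {u₀ : V} (hA : PseudoMonotone A)
    (hu : WeaklyConvergesTo u u₀)
    (hbdd : Bornology.IsBounded (Set.range fun m => A (u m) (u m - u₀)))
    (hliminf : 0 ≤ liminf (fun m => A (u m) (u m - u₀)) atTop) :
    Tendsto (fun m => A (u m) (u m - u₀)) atTop (𝓝 0) := by
  have limsup_le : limsup (fun m => A (u m) (u m - u₀)) atTop ≤ 0 := by
    simpa only [sub_self, map_zero] using hA u u₀ hu hliminf u₀
  exact tendsto_of_le_liminf_of_limsup_le hliminf limsup_le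
    hbdd.bddAbove.isBoundedUnder_of_range hbdd.bddBelow.isBoundedUnder_of_range

end PseudoMonotone

theorem stmt_1_general {V : Type*} [NormedAddCommGroup V] [NormedSpace ℝ V]
    (A : V → StrongDual ℝ V)
    (hbdd : ∀ s : Set V, Bornology.IsBounded s → Bornology.IsBounded (A '' s)) :
    PseudoMonotone A ↔
      ∀ (u : ℕ → V) (u₀ : V), WeaklyConvergesTo u u₀ →
        0 ≤ liminf (fun m => A (u m) (u m - u₀)) atTop →
        (∀ v : V, Tendsto (fun m => A (u m) v) atTop (𝓝 (A u₀ v))) ∧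
          Tendsto (fun m => A (u m) (u m)) atTop (𝓝 (A u₀ u₀)) := by
  constructor
  · intro hA u u₀ hu hliminf
    have range_bdd := hu.isBounded_range_apply_sub hbdd
    have tendsto_zero := hA.tendsto_apply_sub_zero hu (range_bdd u₀) hliminf
    have weakStar : ∀ v, Tendsto (fun m => A (u m) v) atTop (𝓝 (A u₀ v)) :=
      tendsto_apply_of_forall_limsup_apply_sub_le
        (fun v => (range_bdd v).bddAbove.isBoundedUnder_of_range) tendsto_zero
        (hA u u₀ hu hliminf)
    refine ⟨weakStar, ?_⟩
    simpa only [map_sub, sub_add_cancel, zero_add] using tendsto_zero.add (weakStar u₀)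
  · intro h u u₀ hu hliminf v
    obtain ⟨weakStar, diagonal⟩ := h u u₀ hu hliminf
    have tendsto_sub : Tendsto (fun m => A (u m) (u m - v)) atTop (𝓝 (A u₀ (u₀ - v))) := by
      simpa only [map_sub] using diagonal.sub (weakStar v)
    exact tendsto_sub.limsup_eq.le

/-- For a bounded operator `A : V → V*` on a reflexive Banach space `V`,
pseudo-monotonicity is equivalent to: for every weakly convergent sequence
`u_m ⇀ u` with `liminf ⟨A(u_m), u_m − u⟩ ≥ 0`, the sequence `A(u_m)` converges
to `A(u)` in the weak-star topology of `V*` and `⟨A(u_m), u_m⟩ → ⟨A(u), u⟩`. -/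
theorem stmt_1 {V : Type*} [NormedAddCommGroup V] [NormedSpace ℝ V] [CompleteSpace V]
    (hrefl : Function.Surjective (NormedSpace.inclusionInDoubleDual ℝ V))
    (A : V → StrongDual ℝ V)
    (hbdd : ∀ s : Set V, Bornology.IsBounded s → Bornology.IsBounded (A '' s)) :
    PseudoMonotone A ↔
      ∀ (u : ℕ → V) (u₀ : V), WeaklyConvergesTo u u₀ →
        0 ≤ liminf (fun m => A (u m) (u m - u₀)) atTop →
        (∀ v : V, Tendsto (fun m => A (u m) v) atTop (𝓝 (A u₀ v))) ∧
          Tendsto (fun m => A (u m) (u m)) atTop (𝓝 (A u₀ u₀)) :=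
  stmt_1_general A hbdd
end

section
/- Let 1 ≤ p < ∞, T > 0, and let V, H, Y be Banach spaces with continuous embeddings V ⊂ H ⊂ Y, H separable, and with the embedding V ⊂ H compact. Let {Y_m}_{m∈ℕ} be a sequence of V-valued jointly measurable stochastic processes on [0,T] (each defined on a probability space, with ∫₀ᵀ‖Y_m(t)‖_V^p dt < ∞ almost surely) such that: (i) lim_{N→∞} sup_{m∈ℕ} ℙ[∫₀ᵀ ‖Y_m(t)‖_V^p dt > N] = 0; and (ii) for every ε > 0, lim_{δ→0⁺} sup_{m∈ℕ} ℙ[∫₀^{T−δ} ‖Y_m(t+δ) − Y_m(t)‖_Y^p dt > ε] = 0. Then the family of laws of {Y_m}, regarded as random elements of L^p(0,T;H), is tight on L^p(0,T;H). -/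
open Filter Topology MeasureTheory
open scoped ENNReal

/-!
Let `e : V → H` and `j : H → Y` be the embeddings. By Ehrling's inequality
`‖e v‖ ≤ η ‖v‖ + C ‖j (e v)‖`, functions bounded in `L^p(0, T; V)` have small time oscillation in
`H` as soon as it is small in the weaker norm of `Y`. Cut `(0, T]` into cells of length `h` and
replace `e ∘ v` on each cell by its value at a sample point. For sample points chosen by averaging,
the error is controlled by `η ∫ ‖v‖^p` and the mean over `δ ∈ (0, h]` of the translation defects,
while the samples stay bounded in `V`, so the resulting step functions form a compact set. Hence a
bound on the energy together with bounds tending to zero on the mean translation defects defines a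
totally bounded subset of `L^p(0, T; H)`. Since `H` need not be complete, relative compactness takes
one more step: by Fatou's lemma a limit in the completion is almost everywhere a limit of points
`e (v n)` with `v n` bounded, which lies in `H` because `e` is compact.

The mean defects also tend to zero in probability, uniformly over the family: the defects are
dominated by the energy, so on the event of bounded energy Markov's inequality applies. A union
bound over countably many scales then gives tightness.
-/

section Ehrling

variable {V H Y : Type*} [NormedAddCommGroup V] [NormedSpace ℝ V]
  [NormedAddCommGroup H] [NormedSpace ℝ H] [NormedAddCommGroup Y] [NormedSpace ℝ Y]
  {e : V →L[ℝ] H} {j : H →L[ℝ] Y}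

theorem exists_isCompact_forall_norm_le_mem (he : IsCompactOperator e) (r : ℝ) :
    ∃ K : Set H, IsCompact K ∧ ∀ v, ‖v‖ ≤ r → e v ∈ K := by
  obtain ⟨K, hK, hrK⟩ := IsCompactOperator.image_closedBall_subset_compact
    (f := (e : V →ₗ[ℝ] H)) he r
  exact ⟨K, hK, fun v hv => hrK ⟨v, mem_closedBall_zero_iff.2 hv, rfl⟩⟩

theorem exists_norm_eq_one_of_ehrling_lt {η C : ℝ} (hη : 0 < η) (hC : 0 ≤ C) {v : V}
    (hv : η * ‖v‖ + C * ‖j (e v)‖ < ‖e v‖) :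
    ∃ w : V, ‖w‖ ≤ η⁻¹ ∧ ‖e w‖ = 1 ∧ C * ‖j (e w)‖ ≤ 1 := by
  have hηv : 0 ≤ η * ‖v‖ := by positivity
  have hCv : 0 ≤ C * ‖j (e v)‖ := by positivity
  have hpos : 0 < ‖e v‖ := by linarith
  refine ⟨‖e v‖⁻¹ • v, ?_, ?_, ?_⟩ <;>
    simp only [map_smul, norm_smul, norm_inv, norm_norm]
  · rw [inv_mul_le_iff₀ hpos, ← div_eq_mul_inv, le_div_iff₀ hη]
    linarith
  · exact inv_mul_cancel₀ hpos.ne'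
  · rw [mul_left_comm, inv_mul_le_iff₀ hpos]
    linarith

theorem ehrling_inequality (he : IsCompactOperator e) (hj : Function.Injective j) {η : ℝ}
    (hη : 0 < η) : ∃ C : ℝ, 0 ≤ C ∧ ∀ v, ‖e v‖ ≤ η * ‖v‖ + C * ‖j (e v)‖ := by
  by_contra! hcon
  have hw (n : ℕ) : ∃ w : V, ‖w‖ ≤ η⁻¹ ∧ ‖e w‖ = 1 ∧ n * ‖j (e w)‖ ≤ 1 :=
    let ⟨_, hv⟩ := hcon n n.cast_nonneg
    exists_norm_eq_one_of_ehrling_lt hη n.cast_nonneg hv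
  choose w hw_norm he_norm hj_norm using hw
  obtain ⟨K, hK, heK⟩ := exists_isCompact_forall_norm_le_mem he η⁻¹
  obtain ⟨x, -, φ, hφ, hx⟩ := hK.tendsto_subseq fun n => heK (w n) (hw_norm n)
  have hx_norm : ‖x‖ = 1 :=
    tendsto_nhds_unique hx.norm (by simp [he_norm])
  have hjx : ‖j x‖ = 0 := by
    refine tendsto_nhds_unique ((j.continuous.tendsto x).comp hx).norm ?_
    refine squeeze_zero' (.of_forall fun n => norm_nonneg _) ?_
      (tendsto_one_div_atTop_nhds_zero_nat.comp hφ.tendsto_atTop)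
    filter_upwards [hφ.tendsto_atTop.eventually_gt_atTop 0] with n hn
    exact (le_div_iff₀' (Nat.cast_pos.2 hn)).2 (hj_norm (φ n))
  have hx_zero : x = 0 := hj (by rw [norm_eq_zero.1 hjx, map_zero])
  simp [hx_zero] at hx_norm

theorem enorm_sub_rpow_le {E : Type*} [SeminormedAddCommGroup E] {p : ℝ} (hp : 1 ≤ p) (v w : E) :
    ‖v - w‖ₑ ^ p ≤ 2 ^ (p - 1) * (‖v‖ₑ ^ p + ‖w‖ₑ ^ p) :=
  (ENNReal.rpow_le_rpow enorm_sub_le (by linarith)).trans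
    (ENNReal.rpow_add_le_mul_rpow_add_rpow _ _ hp)

theorem ehrling_inequality_rpow (he : IsCompactOperator e) (hj : Function.Injective j) {p : ℝ}
    (hp : 1 ≤ p) {η : ℝ≥0∞} (hη : η ≠ 0) :
    ∃ C : ℝ≥0∞, C ≠ ⊤ ∧ ∀ v, ‖e v‖ₑ ^ p ≤ η * ‖v‖ₑ ^ p + C * ‖j (e v)‖ₑ ^ p := by
  have hp₀ : 0 < p := by linarith
  have htwo : (2 : ℝ≥0∞) ^ (p - 1) ≠ ⊤ := ENNReal.rpow_ne_top_of_nonneg (by linarith) (by simp)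
  obtain ⟨η', hη'_pos, hη'⟩ : ∃ η' : ℝ, 0 < η' ∧ 2 ^ (p - 1) * ENNReal.ofReal η' ^ p ≤ η := by
    have hroot : 0 < (η / 2 ^ (p - 1)) ^ p⁻¹ :=
      ENNReal.rpow_pos_of_nonneg (ENNReal.div_pos hη htwo) (inv_pos.2 hp₀).le
    obtain ⟨η', -, hη'_pos, hη'⟩ := ENNReal.lt_iff_exists_real_btwn.1 hroot
    refine ⟨η', ENNReal.ofReal_pos.1 hη'_pos, ?_⟩
    rw [mul_comm]
    exact ENNReal.mul_le_of_le_div ((ENNReal.le_rpow_inv_iff hp₀).1 hη'.le)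
  obtain ⟨C, hC, h⟩ := ehrling_inequality he hj hη'_pos
  refine ⟨2 ^ (p - 1) * ENNReal.ofReal C ^ p, ENNReal.mul_ne_top htwo
    (ENNReal.rpow_ne_top_of_nonneg hp₀.le ENNReal.ofReal_ne_top), fun v => ?_⟩
  have hv : ‖e v‖ₑ ≤ ENNReal.ofReal η' * ‖v‖ₑ + ENNReal.ofReal C * ‖j (e v)‖ₑ := by
    simp only [← ofReal_norm]
    rw [← ENNReal.ofReal_mul hη'_pos.le, ← ENNReal.ofReal_mul hC,
      ← ENNReal.ofReal_add (by positivity) (by positivity)]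
    exact ENNReal.ofReal_le_ofReal (h v)
  calc ‖e v‖ₑ ^ p
    _ ≤ (ENNReal.ofReal η' * ‖v‖ₑ + ENNReal.ofReal C * ‖j (e v)‖ₑ) ^ p :=
        ENNReal.rpow_le_rpow hv hp₀.le
    _ ≤ 2 ^ (p - 1) * ((ENNReal.ofReal η' * ‖v‖ₑ) ^ p + (ENNReal.ofReal C * ‖j (e v)‖ₑ) ^ p) :=
        ENNReal.rpow_add_le_mul_rpow_add_rpow _ _ hp
    _ = 2 ^ (p - 1) * ENNReal.ofReal η' ^ p * ‖v‖ₑ ^ p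
          + 2 ^ (p - 1) * ENNReal.ofReal C ^ p * ‖j (e v)‖ₑ ^ p := by
        rw [ENNReal.mul_rpow_of_nonneg _ _ hp₀.le, ENNReal.mul_rpow_of_nonneg _ _ hp₀.le]
        ring
    _ ≤ _ := by gcongr

theorem ehrling_inequality_sub_rpow (he : IsCompactOperator e) (hj : Function.Injective j) {p : ℝ}
    (hp : 1 ≤ p) {η : ℝ≥0∞} (hη : η ≠ 0) :
    ∃ C : ℝ≥0∞, C ≠ ⊤ ∧ ∀ v w, ‖e v - e w‖ₑ ^ p ≤
      η * (‖v‖ₑ ^ p + ‖w‖ₑ ^ p) + C * ‖j (e v) - j (e w)‖ₑ ^ p := by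
  have htwo : (2 : ℝ≥0∞) ^ (p - 1) ≠ ⊤ := ENNReal.rpow_ne_top_of_nonneg (by linarith) (by simp)
  obtain ⟨C, hC, h⟩ := ehrling_inequality_rpow he hj hp (ENNReal.div_ne_zero.2 ⟨hη, htwo⟩)
  refine ⟨C, hC, fun v w => ?_⟩
  simp only [← map_sub]
  refine (h (v - w)).trans (add_le_add_left ?_ _)
  calc η / 2 ^ (p - 1) * ‖v - w‖ₑ ^ p
    _ ≤ η / 2 ^ (p - 1) * (2 ^ (p - 1) * (‖v‖ₑ ^ p + ‖w‖ₑ ^ p)) := by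
        gcongr
        exact enorm_sub_rpow_le hp v w
    _ = η * (‖v‖ₑ ^ p + ‖w‖ₑ ^ p) := by
        rw [← mul_assoc, ENNReal.div_mul_cancel (by simp) htwo]

end Ehrling

section LpCompactness

variable {α V H : Type*} [MeasurableSpace α] [NormedAddCommGroup V] [NormedSpace ℝ V]
  [NormedAddCommGroup H] {μ : Measure α} {q : ℝ≥0∞}

theorem stronglyMeasurable_of_isCompactOperator [NormedSpace ℝ H] [MeasurableSpace V]
    [BorelSpace V] {e : V →L[ℝ] H} (he : IsCompactOperator e) {v : α → V} (hv : Measurable v) :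
    StronglyMeasurable fun x => e (v x) := by
  borelize H
  choose K hK heK using fun n : ℕ => exists_isCompact_forall_norm_le_mem he n
  have hsep : TopologicalSpace.IsSeparable (⋃ n, K n) := .iUnion fun n => (hK n).isSeparable
  refine stronglyMeasurable_iff_measurable_separable.2
    ⟨e.continuous.measurable.comp hv, hsep.mono ?_⟩
  rintro _ ⟨x, rfl⟩
  obtain ⟨n, hn⟩ := exists_nat_ge ‖v x‖
  exact Set.mem_iUnion.2 ⟨n, heK n _ hn⟩

theorem memLp_comp_of_finite {ι : Type*} [Finite ι] [MeasurableSpace ι]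
    [DiscreteMeasurableSpace ι] [IsFiniteMeasure μ] {κ : α → ι} (hκ : Measurable κ) (c : ι → H) :
    MemLp (fun t => c (κ t)) q μ := by
  have := Fintype.ofFinite ι
  exact .of_bound
    ((StronglyMeasurable.of_discrete (f := c)).comp_measurable hκ).aestronglyMeasurable
    ‖c‖ (.of_forall fun t => norm_le_pi_norm c _)

theorem isCompact_setOf_ae_eq_comp_of_finite {ι : Type*} [Finite ι] [MeasurableSpace ι]
    [DiscreteMeasurableSpace ι] [IsFiniteMeasure μ] [Fact (1 ≤ q)] {κ : α → ι} (hκ : Measurable κ)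
    {K : Set H} (hK : IsCompact K) :
    IsCompact {f : Lp H q μ | ∃ c : ι → H, (∀ i, c i ∈ K) ∧ f =ᵐ[μ] fun t => c (κ t)} := by
  have := Fintype.ofFinite ι
  have hmem (c : ι → H) : MemLp (fun t => c (κ t)) q μ := memLp_comp_of_finite hκ c
  have hlip : LipschitzWith (μ Set.univ ^ q.toReal⁻¹).toNNReal fun c : ι → H => (hmem c).toLp := by
    intro c d
    rw [Lp.edist_toLp_toLp, ENNReal.coe_toNNReal (by finiteness), edist_dist, dist_eq_norm]
    exact eLpNorm_le_of_ae_bound (.of_forall fun t => norm_le_pi_norm (c - d) (κ t))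
  convert (isCompact_univ_pi fun _ : ι => hK).image hlip.continuous using 1
  ext f
  constructor
  · rintro ⟨c, hc, hf⟩
    exact ⟨c, fun i _ => hc i, Lp.ext ((hmem c).coeFn_toLp.trans hf.symm)⟩
  · rintro ⟨c, hc, rfl⟩
    exact ⟨c, fun i => hc i (Set.mem_univ i), (hmem c).coeFn_toLp⟩

theorem totallyBounded_of_forall_exists_edist_le {X : Type*} [PseudoEMetricSpace X] {S : Set X}
    (h : ∀ ε : ℝ≥0∞, ε ≠ 0 → ε ≠ ⊤ →
      ∃ B : Set X, TotallyBounded B ∧ ∀ x ∈ S, ∃ y ∈ B, edist x y ≤ ε) :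
    TotallyBounded S := by
  refine EMetric.totallyBounded_iff.2 fun ε hε => ?_
  obtain ⟨δ, hδ, hδε⟩ := exists_between (ENNReal.half_pos hε.ne')
  obtain ⟨B, hB, hSB⟩ := h δ hδ.ne' hδε.ne_top
  obtain ⟨t, ht, hBt⟩ := EMetric.totallyBounded_iff.1 hB (ε / 2) (ENNReal.half_pos hε.ne')
  refine ⟨t, ht, fun x hx => ?_⟩
  obtain ⟨y, hy, hxy⟩ := hSB x hx
  obtain ⟨z, hz, hyz⟩ := Set.mem_iUnion₂.1 (hBt hy)
  refine Set.mem_iUnion₂.2 ⟨z, hz, ?_⟩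
  calc edist x z
    _ ≤ edist x y + edist y z := edist_triangle x y z
    _ < ε / 2 + ε / 2 := ENNReal.add_lt_add (hxy.trans_lt hδε) hyz
    _ = ε := ENNReal.add_halves ε

theorem edist_rpow_eq_lintegral_rpow_enorm {p : ℝ} (hp : 0 < p) (f g : Lp H (.ofReal p) μ) :
    edist f g ^ p = ∫⁻ t, ‖f t - g t‖ₑ ^ p ∂μ := by
  rw [Lp.edist_def, eLpNorm_eq_lintegral_rpow_enorm_toReal (by simpa) ENNReal.ofReal_ne_top,
    ENNReal.toReal_ofReal hp.le, one_div, ENNReal.rpow_inv_rpow hp.ne']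
  rfl

theorem mul_le_of_lintegral_comp_le {ι : Type*} [MeasurableSpace ι] [MeasurableSingletonClass ι]
    {κ : α → ι} (hκ : Measurable κ) {h M : ℝ≥0∞} {i : ι} (hi : h ≤ μ (κ ⁻¹' {i}))
    {g : ι → ℝ≥0∞} (hg : ∫⁻ t, g (κ t) ∂μ ≤ M) : h * g i ≤ M :=
  calc h * g i
    _ ≤ g i * μ (κ ⁻¹' {i}) := by rw [mul_comm]; gcongr
    _ = ∫⁻ t in κ ⁻¹' {i}, g (κ t) ∂μ := by
        rw [← setLIntegral_const]
        refine setLIntegral_congr_fun (hκ (measurableSet_singleton i)) fun t ht => ?_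
        rw [show κ t = i from ht]
    _ ≤ M := (setLIntegral_le_lintegral _ _).trans hg

theorem exists_isCompact_forall_step_approximation_mem [NormedSpace ℝ H] {e : V →L[ℝ] H}
    (he : IsCompactOperator e) {p : ℝ} [Fact (1 ≤ ENNReal.ofReal p)] [IsFiniteMeasure μ]
    {ι : Type*} [Finite ι] [MeasurableSpace ι] [DiscreteMeasurableSpace ι] {κ : α → ι}
    (hκ : Measurable κ) {h : ℝ≥0∞} (hh : h ≠ 0) (hκh : ∀ i, h ≤ μ (κ ⁻¹' {i})) {η M : ℝ≥0∞}
    (hη : η ≠ 0) (hM : M ≠ ⊤) :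
    ∃ B : Set (Lp H (.ofReal p) μ), IsCompact B ∧
      ∀ (f : Lp H (.ofReal p) μ) (v : α → V) (s : ι → α), (f =ᵐ[μ] fun t => e (v t)) →
        ∫⁻ t, (η * ‖v (s (κ t))‖ₑ ^ p + ‖e (v t) - e (v (s (κ t)))‖ₑ ^ p) ∂μ ≤ M →
        ∃ g ∈ B, edist f g ^ p ≤ M := by
  have hp : 0 < p := zero_lt_one.trans_le (ENNReal.one_le_ofReal.1 Fact.out)
  have hR : (M / (h * η)) ^ p⁻¹ ≠ ⊤ := ENNReal.rpow_ne_top_of_nonneg (inv_pos.2 hp).le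
    (ENNReal.div_ne_top hM (mul_ne_zero hh hη))
  obtain ⟨K, hK, heK⟩ := exists_isCompact_forall_norm_le_mem he ((M / (h * η)) ^ p⁻¹).toReal
  refine ⟨_, isCompact_setOf_ae_eq_comp_of_finite hκ hK, fun f v s hfv hM_le => ?_⟩
  have hstep := memLp_comp_of_finite (μ := μ) (q := .ofReal p) hκ fun i => e (v (s i))
  have hbound (i : ι) : ‖v (s i)‖ ≤ ((M / (h * η)) ^ p⁻¹).toReal := by
    have hmul : h * (η * ‖v (s i)‖ₑ ^ p) ≤ M :=
      mul_le_of_lintegral_comp_le (g := fun i => η * ‖v (s i)‖ₑ ^ p) hκ (hκh i)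
        ((lintegral_mono fun t => le_self_add).trans hM_le)
    rw [← toReal_enorm]
    refine ENNReal.toReal_mono hR ((ENNReal.le_rpow_inv_iff hp).2 ?_)
    rw [ENNReal.le_div_iff_mul_le (.inl (mul_ne_zero hh hη)) (.inr hM), mul_comm, mul_assoc]
    exact hmul
  refine ⟨hstep.toLp, ⟨_, fun i => heK _ (hbound i), hstep.coeFn_toLp⟩, ?_⟩
  rw [edist_rpow_eq_lintegral_rpow_enorm hp]
  refine le_trans (lintegral_mono_ae ?_) hM_le
  filter_upwards [hfv, hstep.coeFn_toLp] with t hft hstept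
  rw [hft, hstept]
  exact le_add_self

end LpCompactness

section LpImage

variable {α V H : Type*} [MeasurableSpace α] [NormedAddCommGroup V] [NormedSpace ℝ V]
  [NormedAddCommGroup H] [NormedSpace ℝ H] {μ : Measure α} {e : V →L[ℝ] H}

open UniformSpace

theorem mem_range_coe_completion_of_liminf_lt_top (he : IsCompactOperator e) {p : ℝ} (hp : 0 < p)
    {v : ℕ → V} (hv : liminf (fun n => ‖v n‖ₑ ^ p) atTop < ⊤) {y : Completion H}
    (hy : Tendsto (fun n => (e (v n) : Completion H)) atTop (𝓝 y)) :
    y ∈ Set.range ((↑) : H → Completion H) := by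
  obtain ⟨R, hvR, hR⟩ := exists_between hv
  obtain ⟨K, hK, heK⟩ := exists_isCompact_forall_norm_le_mem he (R ^ p⁻¹).toReal
  have hfreq : ∃ᶠ n in atTop, (e (v n) : Completion H) ∈ ((↑) : H → Completion H) '' K := by
    refine (frequently_lt_of_liminf_lt (by isBoundedDefault) hvR).mono fun n hn => ?_
    refine ⟨e (v n), heK _ ?_, rfl⟩
    rw [← toReal_enorm]
    exact ENNReal.toReal_mono (ENNReal.rpow_ne_top_of_nonneg (inv_pos.2 hp).le hR.ne)
      ((ENNReal.le_rpow_inv_iff hp).2 hn.le)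
  have hclosed := (hK.image (Completion.continuous_coe H)).isClosed
  obtain ⟨x, -, hx⟩ := hclosed.mem_of_frequently_of_tendsto hfreq hy
  exact ⟨x, hx⟩

/-- The classes in `L^q(μ; H)` of the functions `e ∘ v` with `v ∈ 𝒱`; functions whose composition
with `e` is not in `L^q` contribute nothing. -/
def lpImage (q : ℝ≥0∞) (μ : Measure α) (e : V →L[ℝ] H) (𝒱 : Set (α → V)) : Set (Lp H q μ) :=
  {f | ∃ v ∈ 𝒱, f =ᵐ[μ] fun t => e (v t)}

variable [MeasurableSpace V] [BorelSpace V] {p : ℝ} [Fact (1 ≤ ENNReal.ofReal p)]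
  {𝒱 : Set (α → V)} {N : ℝ≥0∞}

theorem ae_liminf_lt_top_of_lintegral_le {f : ℕ → α → ℝ≥0∞} (hf : ∀ n, Measurable (f n))
    (hN : N ≠ ⊤) (hfN : ∀ n, ∫⁻ t, f n t ∂μ ≤ N) :
    ∀ᵐ t ∂μ, liminf (fun n => f n t) atTop < ⊤ := by
  refine ae_lt_top (.liminf hf) (ne_top_of_le_ne_top hN ((lintegral_liminf_le hf).trans ?_))
  exact liminf_le_of_frequently_le' (.of_forall hfN)

theorem ae_mem_range_coe_completion_of_mem_closure (he : IsCompactOperator e)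
    (h𝒱 : ∀ v ∈ 𝒱, Measurable v) (hN : N ≠ ⊤) (h𝒱N : ∀ v ∈ 𝒱, ∫⁻ t, ‖v t‖ₑ ^ p ∂μ ≤ N)
    {y : Lp (Completion H) (.ofReal p) μ}
    (hy : y ∈ closure (Completion.toComplL (𝕜 := ℝ).compLp '' lpImage (.ofReal p) μ e 𝒱)) :
    ∀ᵐ t ∂μ, y t ∈ Set.range ((↑) : H → Completion H) := by
  have hp : 0 < p := zero_lt_one.trans_le (ENNReal.one_le_ofReal.1 Fact.out)
  obtain ⟨g, hg, hgy⟩ := mem_closure_iff_seq_limit.1 hy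
  obtain ⟨φ, -, hφ⟩ := (tendstoInMeasure_of_tendsto_Lp hgy).exists_seq_tendsto_ae
  choose f hf hfg using hg
  choose v hv hvf using hf
  have hg_eq : ∀ᵐ t ∂μ, ∀ n, g n t = (e (v n t) : Completion H) := ae_all_iff.2 fun n => by
    filter_upwards [Completion.toComplL (𝕜 := ℝ).coeFn_compLp (f n), hvf n] with t ht ht'
    rw [← hfg n, ht, ht']
    rfl
  have hliminf := ae_liminf_lt_top_of_lintegral_le (μ := μ) (f := fun n t => ‖v (φ n) t‖ₑ ^ p)
    (fun n => (h𝒱 _ (hv _)).enorm.pow_const p) hN fun n => h𝒱N _ (hv _)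
  filter_upwards [hφ, hg_eq, hliminf] with t htendsto hgt hvt
  simp only [hgt] at htendsto
  exact mem_range_coe_completion_of_liminf_lt_top he hp hvt htendsto

theorem isometry_compLpL_toComplL {q : ℝ≥0∞} [Fact (1 ≤ q)] :
    Isometry (Completion.toComplL (𝕜 := ℝ) (E := H).compLpL q μ) := by
  refine AddMonoidHomClass.isometry_of_norm _ fun f => ?_
  rw [Lp.norm_def, Lp.norm_def]
  congr 1
  refine eLpNorm_congr_norm_ae ?_
  filter_upwards [Completion.toComplL (𝕜 := ℝ).coeFn_compLpL f] with t ht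
  rw [ht, Completion.coe_toComplL, Completion.norm_coe]

theorem mem_range_compLp_toComplL {q : ℝ≥0∞} {y : Lp (Completion H) q μ}
    (hy : ∀ᵐ t ∂μ, y t ∈ Set.range ((↑) : H → Completion H)) :
    y ∈ Set.range fun f : Lp H q μ => (Completion.toComplL (𝕜 := ℝ)).compLp f := by
  let g (t : α) : H := Function.invFun ((↑) : H → Completion H) (y t)
  have hg : ∀ᵐ t ∂μ, (g t : Completion H) = y t := hy.mono fun t ht => Function.invFun_eq ht
  have hg_mem : MemLp g q μ :=
    .of_comp_antilipschitzWith (g := ((↑) : H → Completion H))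
      ((Lp.memLp y).ae_eq (EventuallyEq.symm hg)) (Completion.uniformContinuous_coe H)
      Completion.coe_isometry.antilipschitz Completion.coe_zero
  refine ⟨hg_mem.toLp, Lp.ext ?_⟩
  filter_upwards [Completion.toComplL (𝕜 := ℝ).coeFn_compLp hg_mem.toLp, hg_mem.coeFn_toLp, hg]
    with t hcomp hto hgt
  rw [hcomp, hto, ← hgt, Completion.coe_toComplL]

theorem exists_isCompact_lpImage_subset (he : IsCompactOperator e)
    (h𝒱 : ∀ v ∈ 𝒱, Measurable v) (hN : N ≠ ⊤) (h𝒱N : ∀ v ∈ 𝒱, ∫⁻ t, ‖v t‖ₑ ^ p ∂μ ≤ N)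
    (htb : TotallyBounded (lpImage (.ofReal p) μ e 𝒱)) :
    ∃ K, IsCompact K ∧ lpImage (.ofReal p) μ e 𝒱 ⊆ K := by
  set Φ : Lp H (.ofReal p) μ →L[ℝ] Lp (Completion H) (.ofReal p) μ :=
    Completion.toComplL.compLpL (.ofReal p) μ
  have hcompact : IsCompact (closure (Φ '' lpImage (.ofReal p) μ e 𝒱)) :=
    (htb.image Φ.uniformContinuous).closure.isCompact_of_isClosed isClosed_closure
  have hrange : closure (Φ '' lpImage (.ofReal p) μ e 𝒱) ⊆ Set.range Φ := fun y hy =>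
    mem_range_compLp_toComplL (ae_mem_range_coe_completion_of_mem_closure he h𝒱 hN h𝒱N hy)
  exact ⟨Φ ⁻¹' closure (Φ '' lpImage (.ofReal p) μ e 𝒱),
    (isometry_compLpL_toComplL.isEmbedding.isInducing.isCompact_preimage_iff hrange).2 hcompact,
    fun f hf => subset_closure (Set.mem_image_of_mem Φ hf)⟩

end LpImage

section Sampling

variable {α ι : Type*} [MeasurableSpace α] {f : α → ℝ≥0∞} {D : α × α → ℝ≥0∞}

theorem exists_lintegral_const_add_le {ν : Measure α} [IsFiniteMeasure ν] (hν : ν ≠ 0)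
    (hf : Measurable f) (hD : Measurable D) :
    ∃ x, ∫⁻ t, (f x + D (x, t)) ∂ν ≤ ∫⁻ t, f t ∂ν + (ν Set.univ)⁻¹ * ∫⁻ z, D z ∂ν.prod ν := by
  have hν₀ : ν Set.univ ≠ 0 := Measure.measure_univ_ne_zero.2 hν
  have hDint : Measurable fun x => ∫⁻ t, D (x, t) ∂ν := hD.lintegral_prod_right'
  obtain ⟨x, hx⟩ := exists_le_laverage hν
    ((hf.const_mul (ν Set.univ)).add hDint).aemeasurable
  refine ⟨x, ?_⟩
  calc ∫⁻ t, (f x + D (x, t)) ∂ν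
    _ = ν Set.univ * f x + ∫⁻ t, D (x, t) ∂ν := by
        rw [lintegral_add_left measurable_const, lintegral_const, mul_comm]
    _ ≤ ⨍⁻ y, (ν Set.univ * f y + ∫⁻ t, D (y, t) ∂ν) ∂ν := hx
    _ = (ν Set.univ)⁻¹ * (ν Set.univ * ∫⁻ y, f y ∂ν + ∫⁻ z, D z ∂ν.prod ν) := by
        rw [laverage_eq, ENNReal.div_eq_inv_mul, lintegral_add_right _ hDint,
          lintegral_const_mul _ hf, lintegral_prod _ hD.aemeasurable]
    _ = _ := by
        rw [mul_add, ← mul_assoc, ENNReal.inv_mul_cancel hν₀ (measure_ne_top _ _), one_mul]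

variable [MeasurableSpace ι] [MeasurableSingletonClass ι] {κ : α → ι}

theorem lintegral_eq_sum_setLIntegral_fiber [Fintype ι] {μ : Measure α} (hκ : Measurable κ)
    (f : α → ℝ≥0∞) : ∫⁻ t, f t ∂μ = ∑ i, ∫⁻ t in κ ⁻¹' {i}, f t ∂μ := by
  rw [← tsum_fintype (L := .unconditional ι),
    ← lintegral_iUnion (fun i => hκ (measurableSet_singleton i)) (pairwise_disjoint_fiber κ),
    ← Set.preimage_iUnion, Set.iUnion_of_singleton, Set.preimage_univ, setLIntegral_univ]

theorem sum_lintegral_prod_fiber [Fintype ι] {μ : Measure α} [SFinite μ] (hκ : Measurable κ)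
    (D : α × α → ℝ≥0∞) :
    ∑ i, ∫⁻ z, D z ∂(μ.restrict (κ ⁻¹' {i})).prod (μ.restrict (κ ⁻¹' {i})) =
      ∫⁻ z in {z | κ z.1 = κ z.2}, D z ∂μ.prod μ := by
  have hunion : {z : α × α | κ z.1 = κ z.2} = ⋃ i, (κ ⁻¹' {i}) ×ˢ (κ ⁻¹' {i}) := by
    ext z
    simp [eq_comm]
  have hfiber (i : ι) : MeasurableSet (κ ⁻¹' {i}) := hκ (measurableSet_singleton i)
  rw [hunion, lintegral_iUnion (fun i => (hfiber i).prod (hfiber i)) ?_, tsum_fintype]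
  · simp only [Measure.prod_restrict]
  · exact fun i k hik => Set.disjoint_prod.2 (.inl (pairwise_disjoint_fiber κ hik))

theorem exists_sample_lintegral_le [Finite ι] {μ : Measure α} [IsFiniteMeasure μ]
    (hκ : Measurable κ) {h : ℝ≥0∞} (hh : h ≠ 0) (hκh : ∀ i, h ≤ μ (κ ⁻¹' {i}))
    (hf : Measurable f) (hD : Measurable D) :
    ∃ s : ι → α, ∫⁻ t, (f (s (κ t)) + D (s (κ t), t)) ∂μ ≤
      ∫⁻ t, f t ∂μ + h⁻¹ * ∫⁻ z in {z | κ z.1 = κ z.2}, D z ∂μ.prod μ := by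
  have := Fintype.ofFinite ι
  have hsample (i : ι) := exists_lintegral_const_add_le (ν := μ.restrict (κ ⁻¹' {i}))
    (Measure.restrict_eq_zero.not.2 (ne_bot_of_le_ne_bot hh (hκh i))) hf hD
  choose s hs using hsample
  refine ⟨s, ?_⟩
  rw [lintegral_eq_sum_setLIntegral_fiber hκ, lintegral_eq_sum_setLIntegral_fiber hκ f,
    ← sum_lintegral_prod_fiber hκ, Finset.mul_sum, ← Finset.sum_add_distrib]
  refine Finset.sum_le_sum fun i _ => ?_
  calc ∫⁻ t in κ ⁻¹' {i}, (f (s (κ t)) + D (s (κ t), t)) ∂μ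
    _ = ∫⁻ t in κ ⁻¹' {i}, (f (s i) + D (s i, t)) ∂μ := by
        refine setLIntegral_congr_fun (hκ (measurableSet_singleton i)) fun t ht => ?_
        rw [show κ t = i from ht]
    _ ≤ _ := hs i
    _ ≤ _ := by
        gcongr
        rw [Measure.restrict_apply_univ]
        exact hκh i

end Sampling

section Partition

theorem natCeil_div_eq_add_one_iff {h : ℝ} (hh : 0 < h) {i : ℕ} {t : ℝ} :
    ⌈t / h⌉₊ = i + 1 ↔ t ∈ Set.Ioc (i * h) ((i + 1) * h) := by
  rw [Nat.ceil_eq_iff i.succ_ne_zero, lt_div_iff₀ hh, div_le_iff₀ hh]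
  simp

theorem exists_partition_Ioc {h : ℝ} (hh : 0 < h) (n : ℕ) [NeZero n] :
    ∃ κ : ℝ → Fin n, Measurable κ ∧
      (∀ i, .ofReal h ≤ volume.restrict (Set.Ioc 0 (n * h)) (κ ⁻¹' {i})) ∧
      ∀ s ∈ Set.Ioc 0 (n * h), ∀ t ∈ Set.Ioc 0 (n * h), κ s = κ t → |s - t| ≤ h := by
  let κ (t : ℝ) : Fin n := Fin.ofNat n (⌈t / h⌉₊ - 1)
  have hκ_of_mem {i : Fin n} {t : ℝ} (ht : t ∈ Set.Ioc (i * h) ((i + 1) * h)) : κ t = i := by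
    simp only [κ, (natCeil_div_eq_add_one_iff hh).2 ht, Nat.add_sub_cancel, Fin.ofNat_val_eq_self]
  have hcell (i : Fin n) : Set.Ioc (i * h) ((i + 1) * h) ⊆ Set.Ioc 0 (n * h) :=
    Set.Ioc_subset_Ioc (by positivity) (by gcongr; exact_mod_cast i.isLt)
  have hmem_of_κ {t : ℝ} (ht : t ∈ Set.Ioc 0 (n * h)) :
      t ∈ Set.Ioc (κ t * h) ((κ t + 1) * h) := by
    have hpos : 0 < ⌈t / h⌉₊ := Nat.ceil_pos.2 (div_pos ht.1 hh)
    have hle : ⌈t / h⌉₊ ≤ n := Nat.ceil_le.2 ((div_le_iff₀ hh).2 ht.2)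
    refine (natCeil_div_eq_add_one_iff hh).1 ?_
    rw [Fin.val_ofNat, Nat.mod_eq_of_lt (by omega), Nat.sub_add_cancel hpos]
  refine ⟨κ, (Measurable.of_discrete (f := fun k : ℕ => Fin.ofNat n (k - 1))).comp
    (Nat.measurable_ceil.comp (measurable_id.div_const h)), fun i => ?_, fun s hs t ht hst => ?_⟩
  · calc ENNReal.ofReal h
      _ = volume (Set.Ioc (i * h) ((i + 1) * h)) := by rw [Real.volume_Ioc]; ring_nf
      _ ≤ volume.restrict (Set.Ioc 0 (n * h)) (κ ⁻¹' {i}) := by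
          rw [Measure.restrict_apply' measurableSet_Ioc]
          exact measure_mono fun t ht => ⟨hκ_of_mem ht, hcell i ht⟩
  · have hs' := hmem_of_κ hs
    have ht' := hmem_of_κ ht
    rw [hst] at hs'
    rw [abs_le]
    constructor <;> linarith [hs'.1, hs'.2, ht'.1, ht'.2]

end Partition

section Translations

/-- The `p`-th power of the `L^p(0, T - δ; E)` norm of the increment `u (· + δ) - u`. -/
noncomputable def translationDefect {E : Type*} [NormedAddCommGroup E] (p T δ : ℝ) (u : ℝ → E) :
    ℝ≥0∞ :=
  ∫⁻ t in Set.Ioc 0 (T - δ), ‖u (t + δ) - u t‖ₑ ^ p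

/-- The pairs `s ≤ t` of points of `(0, T]` at distance at most `h`. -/
def diagonalStrip (T h : ℝ) : Set (ℝ × ℝ) :=
  {z | 0 < z.1 ∧ z.1 ≤ z.2 ∧ z.2 ≤ T ∧ z.2 ≤ z.1 + h}

theorem measurableSet_diagonalStrip (T h : ℝ) : MeasurableSet (diagonalStrip T h) := by
  unfold diagonalStrip
  measurability

theorem setLIntegral_diagonalStrip {g : ℝ × ℝ → ℝ≥0∞} (hg : Measurable g) (T h : ℝ) :
    ∫⁻ z in diagonalStrip T h, g z =
      ∫⁻ δ in Set.Ioc 0 h, ∫⁻ t in Set.Ioc 0 (T - δ), g (t, t + δ) := by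
  have hshear := measurePreserving_prod_add_swap (volume : Measure ℝ) (volume : Measure ℝ)
  have hpre : MeasurableSet ((fun z : ℝ × ℝ => (z.2, z.2 + z.1)) ⁻¹' diagonalStrip T h) :=
    hshear.measurable (measurableSet_diagonalStrip T h)
  have hg_shear : Measurable fun z : ℝ × ℝ => g (z.2, z.2 + z.1) := hg.comp hshear.measurable
  rw [Measure.volume_eq_prod,
    ← hshear.setLIntegral_comp_preimage (measurableSet_diagonalStrip T h) hg,
    ← lintegral_indicator hpre, lintegral_prod _ (hg_shear.indicator hpre).aemeasurable,
    Measure.restrict_congr_set Ioc_ae_eq_Icc, ← lintegral_indicator measurableSet_Icc]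
  refine lintegral_congr fun δ => ?_
  have hmem (t : ℝ) : (t, t + δ) ∈ diagonalStrip T h ↔ δ ∈ Set.Icc 0 h ∧ t ∈ Set.Ioc 0 (T - δ) := by
    simp only [diagonalStrip, Set.mem_ofPred_eq, Set.mem_Icc, Set.mem_Ioc, le_sub_iff_add_le]
    grind
  by_cases hδ : δ ∈ Set.Icc 0 h
  · rw [Set.indicator_of_mem hδ, ← lintegral_indicator measurableSet_Ioc]
    simp only [Set.indicator, Set.mem_preimage, hmem, hδ, true_and]
  · simp only [Set.indicator, Set.mem_preimage, hmem, hδ, false_and, if_false, lintegral_zero]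

theorem setLIntegral_near_diagonal_le {g : ℝ × ℝ → ℝ≥0∞} (hg : Measurable g)
    (hsymm : ∀ z, g z.swap = g z) {T h : ℝ} {S : Set (ℝ × ℝ)}
    (hS : ∀ z ∈ S, z.1 ∈ Set.Ioc 0 T ∧ z.2 ∈ Set.Ioc 0 T ∧ |z.1 - z.2| ≤ h) :
    ∫⁻ z in S, g z ≤ 2 * ∫⁻ δ in Set.Ioc 0 h, ∫⁻ t in Set.Ioc 0 (T - δ), g (t, t + δ) := by
  have hcover : S ⊆ diagonalStrip T h ∪ Prod.swap ⁻¹' diagonalStrip T h := by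
    rintro ⟨s, t⟩ hst
    obtain ⟨hs, ht, hdist⟩ := hS _ hst
    rw [abs_le] at hdist
    rcases le_total s t with hle | hle
    · exact .inl ⟨hs.1, hle, ht.2, by linarith [hdist.1]⟩
    · exact .inr ⟨ht.1, hle, hs.2, by rw [← sub_le_iff_le_add']; exact hdist.2⟩
  calc ∫⁻ z in S, g z
    _ ≤ (∫⁻ z in diagonalStrip T h, g z) + ∫⁻ z in Prod.swap ⁻¹' diagonalStrip T h, g z :=
        (lintegral_mono_set hcover).trans (lintegral_union_le _ _ _)
    _ = 2 * ∫⁻ z in diagonalStrip T h, g z := by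
        have hswap := (Measure.measurePreserving_swap (μ := (volume : Measure ℝ))
          (ν := (volume : Measure ℝ))).setLIntegral_comp_preimage
          (measurableSet_diagonalStrip T h) hg
        simp only [hsymm] at hswap
        rw [Measure.volume_eq_prod, hswap, two_mul]
    _ = _ := by rw [setLIntegral_diagonalStrip hg]

theorem setLIntegral_same_cell_enorm_sub_rpow_le {E : Type*} [NormedAddCommGroup E] {p : ℝ}
    {u : ℝ → E} (hu : StronglyMeasurable u) {ι : Type*} {κ : ℝ → ι} {T h : ℝ}
    (hκ : ∀ s ∈ Set.Ioc 0 T, ∀ t ∈ Set.Ioc 0 T, κ s = κ t → |s - t| ≤ h) :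
    ∫⁻ z in {z | κ z.1 = κ z.2}, ‖u z.2 - u z.1‖ₑ ^ p
      ∂(volume.restrict (Set.Ioc 0 T)).prod (volume.restrict (Set.Ioc 0 T)) ≤
      2 * ∫⁻ δ in Set.Ioc 0 h, translationDefect p T δ u := by
  have hmeas : Measurable fun z : ℝ × ℝ => ‖u z.2 - u z.1‖ₑ ^ p :=
    ((hu.comp_measurable measurable_snd).sub
      (hu.comp_measurable measurable_fst)).enorm.pow_const p
  rw [Measure.prod_restrict, ← Measure.volume_eq_prod, Measure.restrict_restrict'
    (measurableSet_Ioc.prod measurableSet_Ioc)]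
  refine setLIntegral_near_diagonal_le hmeas (fun z => ?_) fun z hz => ?_
  · rw [Prod.fst_swap, Prod.snd_swap, enorm_sub_rev]
  · exact ⟨hz.2.1, hz.2.2, hκ _ hz.2.1 _ hz.2.2 hz.1⟩

end Translations

section TotallyBounded

variable {V H Y : Type*} [NormedAddCommGroup V] [NormedSpace ℝ V] [MeasurableSpace V]
  [BorelSpace V] [NormedAddCommGroup H] [NormedSpace ℝ H] [NormedAddCommGroup Y]
  [NormedSpace ℝ Y] {e : V →L[ℝ] H} {j : H →L[ℝ] Y} {p : ℝ}

theorem stronglyMeasurable_comp_of_isCompactOperator {α : Type*} [MeasurableSpace α]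
    (he : IsCompactOperator e) (j : H →L[ℝ] Y) {v : α → V} (hv : Measurable v) :
    StronglyMeasurable fun x => j (e (v x)) :=
  j.continuous.comp_stronglyMeasurable (stronglyMeasurable_of_isCompactOperator he hv)

theorem exists_step_approximation {η C : ℝ≥0∞}
    (hehrling : ∀ v w, ‖e v - e w‖ₑ ^ p ≤
      η * (‖v‖ₑ ^ p + ‖w‖ₑ ^ p) + C * ‖j (e v) - j (e w)‖ₑ ^ p)
    {ι : Type*} [Finite ι] [MeasurableSpace ι] [MeasurableSingletonClass ι] {κ : ℝ → ι} {T h : ℝ}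
    (hh : 0 < h) (hκ : Measurable κ)
    (hκ_volume : ∀ i, .ofReal h ≤ volume.restrict (Set.Ioc 0 T) (κ ⁻¹' {i}))
    (hκ_dist : ∀ s ∈ Set.Ioc 0 T, ∀ t ∈ Set.Ioc 0 T, κ s = κ t → |s - t| ≤ h)
    {v : ℝ → V} (hv : Measurable v) (hjev : StronglyMeasurable fun t => j (e (v t))) :
    ∃ s : ι → ℝ,
      ∫⁻ t in Set.Ioc 0 T, (η * ‖v (s (κ t))‖ₑ ^ p + ‖e (v t) - e (v (s (κ t)))‖ₑ ^ p) ≤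
        3 * η * (∫⁻ t in Set.Ioc 0 T, ‖v t‖ₑ ^ p) +
          2 * C * ⨍⁻ δ in Set.Ioc 0 h, translationDefect p T δ (fun t => j (e (v t))) ∂volume := by
  have hvp : Measurable fun t => ‖v t‖ₑ ^ p := hv.enorm.pow_const p
  have hincr : Measurable fun z : ℝ × ℝ => ‖j (e (v z.2)) - j (e (v z.1))‖ₑ ^ p :=
    ((hjev.comp_measurable measurable_snd).sub
      (hjev.comp_measurable measurable_fst)).enorm.pow_const p
  obtain ⟨s, hs⟩ := exists_sample_lintegral_le hκ (ENNReal.ofReal_pos.2 hh).ne' hκ_volume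
    (hvp.const_mul (2 * η)) (hincr.const_mul C)
  refine ⟨s, ?_⟩
  calc ∫⁻ t in Set.Ioc 0 T, (η * ‖v (s (κ t))‖ₑ ^ p + ‖e (v t) - e (v (s (κ t)))‖ₑ ^ p)
    _ ≤ ∫⁻ t in Set.Ioc 0 T, (η * ‖v t‖ₑ ^ p +
          (2 * η * ‖v (s (κ t))‖ₑ ^ p + C * ‖j (e (v t)) - j (e (v (s (κ t))))‖ₑ ^ p)) := by
        refine lintegral_mono fun t => (add_le_add_right (hehrling _ _) _).trans_eq ?_
        ring
    _ ≤ η * (∫⁻ t in Set.Ioc 0 T, ‖v t‖ₑ ^ p) + (2 * η * (∫⁻ t in Set.Ioc 0 T, ‖v t‖ₑ ^ p) +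
          (ENNReal.ofReal h)⁻¹ * (C * (2 * ∫⁻ δ in Set.Ioc 0 h,
            translationDefect p T δ fun t => j (e (v t))))) := by
        rw [lintegral_add_left (hvp.const_mul η), lintegral_const_mul η hvp]
        refine add_le_add_right (hs.trans ?_) _
        rw [lintegral_const_mul _ hvp, lintegral_const_mul _ hincr]
        gcongr
        exact setLIntegral_same_cell_enorm_sub_rpow_le hjev hκ_dist
    _ = _ := by
        rw [setLAverage_eq, Real.volume_Ioc, sub_zero, ENNReal.div_eq_inv_mul]
        ring

theorem totallyBounded_lpImage [Fact (1 ≤ ENNReal.ofReal p)] (he : IsCompactOperator e)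
    (hj : Function.Injective j) {T : ℝ} (hT : 0 < T)
    {𝒱 : Set (ℝ → V)} (h𝒱 : ∀ v ∈ 𝒱, Measurable v) {N : ℝ≥0∞} (hN : N ≠ ⊤)
    (h𝒱N : ∀ v ∈ 𝒱, ∫⁻ t in Set.Ioc 0 T, ‖v t‖ₑ ^ p ≤ N)
    (h𝒱_trans : ∀ θ : ℝ≥0∞, θ ≠ 0 → ∃ n : ℕ, n ≠ 0 ∧ ∀ v ∈ 𝒱, ⨍⁻ δ in Set.Ioc 0 (T / n),
      translationDefect p T δ (fun t => j (e (v t))) ∂volume ≤ θ) :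
    TotallyBounded (lpImage (.ofReal p) (volume.restrict (Set.Ioc 0 T)) e 𝒱) := by
  have hp : 1 ≤ p := ENNReal.one_le_ofReal.1 Fact.out
  have hp₀ : 0 < p := by linarith
  refine totallyBounded_of_forall_exists_edist_le fun ε hε hε_top => ?_
  have hεp : ε ^ p / 2 ≠ 0 :=
    (ENNReal.half_pos (ENNReal.rpow_pos_of_nonneg hε.bot_lt hp₀.le).ne').ne'
  obtain ⟨η, hη, hηN⟩ := ENNReal.exists_nnreal_pos_mul_lt
    (ENNReal.mul_ne_top ENNReal.ofNat_ne_top hN : 3 * N ≠ ⊤) hεp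
  obtain ⟨C, hC, hehrling⟩ := ehrling_inequality_sub_rpow he hj hp (ENNReal.coe_ne_zero.2 hη.ne')
  obtain ⟨θ, hθ, hθC⟩ := ENNReal.exists_nnreal_pos_mul_lt
    (ENNReal.mul_ne_top ENNReal.ofNat_ne_top hC : 2 * C ≠ ⊤) hεp
  obtain ⟨n, hn, hnθ⟩ := h𝒱_trans θ (ENNReal.coe_ne_zero.2 hθ.ne')
  have : NeZero n := ⟨hn⟩
  have hh : 0 < T / n := div_pos hT (by positivity)
  obtain ⟨κ, hκ, hκ_volume, hκ_dist⟩ := exists_partition_Ioc hh n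
  rw [mul_div_cancel₀ T (Nat.cast_ne_zero.2 hn)] at hκ_volume hκ_dist
  obtain ⟨B, hB, hB_approx⟩ := exists_isCompact_forall_step_approximation_mem (p := p) he hκ
    (ENNReal.ofReal_pos.2 hh).ne' hκ_volume (ENNReal.coe_ne_zero.2 hη.ne')
    (ENNReal.rpow_ne_top_of_nonneg hp₀.le hε_top)
  refine ⟨B, hB.totallyBounded, ?_⟩
  rintro f ⟨v, hv, hfv⟩
  obtain ⟨s, hs⟩ := exists_step_approximation hehrling hh hκ hκ_volume hκ_dist (h𝒱 v hv)
    (stronglyMeasurable_comp_of_isCompactOperator he j (h𝒱 v hv))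
  obtain ⟨g, hg, hfg⟩ := hB_approx f v s hfv <|
    calc _ ≤ _ := hs
      _ ≤ 3 * η * N + 2 * C * θ := by gcongr; exacts [h𝒱N v hv, hnθ v hv]
      _ ≤ ε ^ p / 2 + ε ^ p / 2 := by
        refine add_le_add (le_of_eq_of_le ?_ hηN.le) (le_of_eq_of_le ?_ hθC.le) <;> ring
      _ = ε ^ p := ENNReal.add_halves _
  exact ⟨g, hg, (ENNReal.rpow_le_rpow_iff hp₀).1 hfg⟩

end TotallyBounded

section TranslationBounds

theorem setLIntegral_Ioc_comp_add_right_le {δ : ℝ} (hδ : 0 ≤ δ) (T : ℝ) (f : ℝ → ℝ≥0∞) :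
    ∫⁻ t in Set.Ioc 0 (T - δ), f (t + δ) ≤ ∫⁻ t in Set.Ioc 0 T, f t := by
  calc ∫⁻ t in Set.Ioc 0 (T - δ), f (t + δ)
    _ = ∫⁻ t in (· + δ) ⁻¹' Set.Ioc δ T, f (t + δ) := by rw [Set.preimage_add_const_Ioc, sub_self]
    _ = ∫⁻ t in Set.Ioc δ T, f t :=
        (measurePreserving_add_right volume δ).setLIntegral_comp_preimage_emb
          (measurableEmbedding_addRight δ) f _
    _ ≤ ∫⁻ t in Set.Ioc 0 T, f t := lintegral_mono_set (Set.Ioc_subset_Ioc_left hδ)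

theorem translationDefect_le {E : Type*} [NormedAddCommGroup E] {p : ℝ} (hp : 1 ≤ p) {δ : ℝ}
    (hδ : 0 ≤ δ) (T : ℝ) {u : ℝ → E} (hu : StronglyMeasurable u) :
    translationDefect p T δ u ≤ 2 ^ (p - 1) * 2 * ∫⁻ t in Set.Ioc 0 T, ‖u t‖ₑ ^ p := by
  have hup : Measurable fun t => ‖u t‖ₑ ^ p := hu.enorm.pow_const p
  have htwo : (2 : ℝ≥0∞) ^ (p - 1) ≠ ⊤ := ENNReal.rpow_ne_top_of_nonneg (by linarith) (by simp)
  calc translationDefect p T δ u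
    _ ≤ ∫⁻ t in Set.Ioc 0 (T - δ), 2 ^ (p - 1) * (‖u (t + δ)‖ₑ ^ p + ‖u t‖ₑ ^ p) :=
        lintegral_mono fun t => enorm_sub_rpow_le hp _ _
    _ = 2 ^ (p - 1) * ((∫⁻ t in Set.Ioc 0 (T - δ), ‖u (t + δ)‖ₑ ^ p) +
          ∫⁻ t in Set.Ioc 0 (T - δ), ‖u t‖ₑ ^ p) := by
        rw [lintegral_const_mul' _ _ htwo, lintegral_add_right _ hup]
    _ ≤ 2 ^ (p - 1) * ((∫⁻ t in Set.Ioc 0 T, ‖u t‖ₑ ^ p) + ∫⁻ t in Set.Ioc 0 T, ‖u t‖ₑ ^ p) := by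
        refine mul_le_mul_right (add_le_add ?_ (lintegral_mono_set ?_)) _
        · exact setLIntegral_Ioc_comp_add_right_le hδ T fun t => ‖u t‖ₑ ^ p
        · exact Set.Ioc_subset_Ioc_right (by linarith)
    _ = _ := by ring

theorem measurable_translationDefect {Ω E : Type*} [MeasurableSpace Ω] [NormedAddCommGroup E]
    {u : Ω → ℝ → E} (hu : StronglyMeasurable (Function.uncurry u)) (p T : ℝ) :
    Measurable fun z : Ω × ℝ => translationDefect p T z.2 (u z.1) := by
  have hincr : Measurable fun z : (Ω × ℝ) × ℝ => ‖u z.1.1 (z.2 + z.1.2) - u z.1.1 z.2‖ₑ ^ p :=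
    ((hu.comp_measurable (g := fun z : (Ω × ℝ) × ℝ => (z.1.1, z.2 + z.1.2)) (by fun_prop)).sub
      (hu.comp_measurable (g := fun z : (Ω × ℝ) × ℝ => (z.1.1, z.2))
        (by fun_prop))).enorm.pow_const p
  have hS : MeasurableSet {z : (Ω × ℝ) × ℝ | z.2 ∈ Set.Ioc 0 (T - z.1.2)} :=
    (measurableSet_lt measurable_const measurable_snd).inter
      (measurableSet_le measurable_snd (by fun_prop))
  simp only [translationDefect, ← lintegral_indicator measurableSet_Ioc]
  exact (hincr.indicator hS).lintegral_prod_right'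

theorem lintegral_enorm_clm_rpow_le {α E F : Type*} [MeasurableSpace α] [NormedAddCommGroup E]
    [NormedSpace ℝ E] [NormedAddCommGroup F] [NormedSpace ℝ F] (L : E →L[ℝ] F) {p : ℝ} (hp : 0 ≤ p)
    (μ : Measure α) (v : α → E) :
    ∫⁻ t, ‖L (v t)‖ₑ ^ p ∂μ ≤ ‖L‖ₑ ^ p * ∫⁻ t, ‖v t‖ₑ ^ p ∂μ := by
  rw [← lintegral_const_mul' _ _ (ENNReal.rpow_ne_top_of_nonneg hp enorm_ne_top)]
  refine lintegral_mono fun t => ?_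
  rw [← ENNReal.mul_rpow_of_nonneg _ _ hp]
  exact ENNReal.rpow_le_rpow (L.le_opENorm (v t)) hp

end TranslationBounds

section InProbability

variable {ι β : Type*} {Ω : ι → Type*} [∀ i, MeasurableSpace (Ω i)]

/-- Boundedness in probability of a family of nonnegative random variables, uniformly over the
family. Each one lives on its own probability space. -/
def UniformlyBoundedInProbability (P : ∀ i, Measure (Ω i)) (X : ∀ i, Ω i → ℝ≥0∞) : Prop :=
  Tendsto (fun N : ℝ => ⨆ i, P i {ω | .ofReal N < X i ω}) atTop (𝓝 0)

/-- Convergence to zero in probability of `X i b` as `b` tends along `l`, uniformly in `i`. -/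
def UniformlyTendstoZeroInProbability (P : ∀ i, Measure (Ω i)) (l : Filter β)
    (X : ∀ i, β → Ω i → ℝ≥0∞) : Prop :=
  ∀ ε > (0 : ℝ), Tendsto (fun b => ⨆ i, P i {ω | .ofReal ε < X i b ω}) l (𝓝 0)

theorem tendsto_iSup_zero_iff {l : Filter β} {f : β → ι → ℝ≥0∞} :
    Tendsto (fun b => ⨆ i, f b i) l (𝓝 0) ↔ ∀ r > 0, ∀ᶠ b in l, ∀ i, f b i ≤ r := by
  simp only [ENNReal.tendsto_nhds_zero, iSup_le_iff]

theorem lintegral_min_le_add {Ω : Type*} [MeasurableSpace Ω] {P : Measure Ω}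
    [IsProbabilityMeasure P] {X : Ω → ℝ≥0∞} (hX : Measurable X) (a M : ℝ≥0∞) :
    ∫⁻ ω, min (X ω) M ∂P ≤ a + M * P {ω | a < X ω} := by
  have hpointwise (ω : Ω) : min (X ω) M ≤ a + {ω | a < X ω}.indicator (fun _ => M) ω := by
    by_cases hω : a < X ω
    · rw [Set.indicator_of_mem (by exact hω)]
      exact (min_le_right _ _).trans le_add_self
    · exact (min_le_left _ _).trans ((not_lt.1 hω).trans le_self_add)
  calc ∫⁻ ω, min (X ω) M ∂P
    _ ≤ ∫⁻ ω, (a + {ω | a < X ω}.indicator (fun _ => M) ω) ∂P := lintegral_mono hpointwise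
    _ = a + M * P {ω | a < X ω} := by
        rw [lintegral_add_left measurable_const, lintegral_const, measure_univ, mul_one,
          lintegral_indicator_const (measurableSet_lt measurable_const hX)]

-- Markov's inequality for the average of the truncation `min X M`, which agrees with the average
-- of `X` on the event considered.
theorem mul_measure_lt_lintegral_le {Ω : Type*} [MeasurableSpace Ω] {P : Measure Ω}
    [IsProbabilityMeasure P] [MeasurableSpace β] {ν : Measure β} [IsProbabilityMeasure ν]
    {X : β → Ω → ℝ≥0∞} (hX : Measurable fun z : Ω × β => X z.2 z.1) {a r : ℝ≥0∞}
    (hr : ∀ᵐ b ∂ν, P {ω | a < X b ω} ≤ r) (M θ : ℝ≥0∞) :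
    θ * P {ω | (∀ᵐ b ∂ν, X b ω ≤ M) ∧ θ < ∫⁻ b, X b ω ∂ν} ≤ a + M * r := by
  have hmin : Measurable fun z : Ω × β => min (X z.2 z.1) M := hX.min measurable_const
  calc θ * P {ω | (∀ᵐ b ∂ν, X b ω ≤ M) ∧ θ < ∫⁻ b, X b ω ∂ν}
    _ ≤ θ * P {ω | θ ≤ ∫⁻ b, min (X b ω) M ∂ν} := by
        gcongr with ω
        rintro ⟨hM, hθ⟩
        exact hθ.le.trans_eq (lintegral_congr_ae (hM.mono fun b hb => (min_eq_left hb).symm))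
    _ ≤ ∫⁻ ω, ∫⁻ b, min (X b ω) M ∂ν ∂P := mul_meas_ge_le_lintegral hmin.lintegral_prod_right' θ
    _ = ∫⁻ b, ∫⁻ ω, min (X b ω) M ∂P ∂ν :=
        lintegral_lintegral_swap (f := fun ω b => min (X b ω) M) hmin.aemeasurable
    _ ≤ ∫⁻ _, (a + M * r) ∂ν := by
        refine lintegral_mono_ae (hr.mono fun b hb => ?_)
        have hXb : Measurable (X b) := hX.comp measurable_prodMk_right
        exact (lintegral_min_le_add hXb a M).trans (by gcongr)
    _ = a + M * r := by rw [lintegral_const, measure_univ, mul_one]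

theorem mul_measure_lt_setLAverage_le {Ω : Type*} [MeasurableSpace Ω] {P : Measure Ω}
    [IsProbabilityMeasure P] [MeasurableSpace β] {μ : Measure β} {s : Set β}
    (hs : MeasurableSet s) (hs₀ : μ s ≠ 0) (hs_top : μ s ≠ ⊤)
    {X : β → Ω → ℝ≥0∞} (hX : Measurable fun z : Ω × β => X z.2 z.1) {a r : ℝ≥0∞}
    (hr : ∀ b ∈ s, P {ω | a < X b ω} ≤ r) (M θ : ℝ≥0∞) :
    θ * P {ω | (∀ b ∈ s, X b ω ≤ M) ∧ θ < ⨍⁻ b in s, X b ω ∂μ} ≤ a + M * r := by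
  have : IsFiniteMeasure (μ.restrict s) := isFiniteMeasure_restrict.2 hs_top
  have : NeZero (μ.restrict s) := ⟨Measure.restrict_eq_zero.not.2 hs₀⟩
  have hae {q : β → Prop} (hq : ∀ b ∈ s, q b) :
      ∀ᵐ b ∂(μ.restrict s Set.univ)⁻¹ • μ.restrict s, q b :=
    Measure.ae_smul_measure (ae_restrict_of_forall_mem hs hq) _
  refine le_trans ?_ (mul_measure_lt_lintegral_le hX (hae hr) M θ)
  gcongr with ω
  · exact hae
  · exact le_rfl

theorem UniformlyTendstoZeroInProbability.comp {γ : Type*} {P : ∀ i, Measure (Ω i)} {l : Filter β}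
    {l' : Filter γ} {X : ∀ i, β → Ω i → ℝ≥0∞} (hX : UniformlyTendstoZeroInProbability P l X)
    {φ : γ → β} (hφ : Tendsto φ l' l) :
    UniformlyTendstoZeroInProbability P l' fun i c => X i (φ c) :=
  fun ε hε => (hX ε hε).comp hφ

theorem UniformlyTendstoZeroInProbability.exists_seq {P : ∀ i, Measure (Ω i)} {l : Filter β}
    [l.NeBot] {X : ∀ i, β → Ω i → ℝ≥0∞} (hX : UniformlyTendstoZeroInProbability P l X)
    {θ : ℕ → ℝ} (hθ : ∀ k, 0 < θ k) {r : ℝ≥0∞} (hr : r ≠ 0) :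
    ∃ b : ℕ → β, ∀ i, P i {ω | ∃ k, .ofReal (θ k) < X i (b k) ω} ≤ r := by
  obtain ⟨r', hr'_pos, hr'_sum⟩ := ENNReal.exists_pos_sum_of_countable' hr ℕ
  choose b hb using fun k => (tendsto_iSup_zero_iff.1 (hX (θ k) (hθ k)) (r' k) (hr'_pos k)).exists
  refine ⟨b, fun i => ?_⟩
  calc P i {ω | ∃ k, .ofReal (θ k) < X i (b k) ω}
    _ ≤ ∑' k, P i {ω | .ofReal (θ k) < X i (b k) ω} := by
        rw [Set.ofPred_exists]
        exact measure_iUnion_le _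
    _ ≤ r := (ENNReal.tsum_le_tsum fun k => hb k i).trans hr'_sum.le

theorem UniformlyTendstoZeroInProbability.laverage {P : ∀ i, Measure (Ω i)}
    [∀ i, IsProbabilityMeasure (P i)] {X : ∀ i, ℝ → Ω i → ℝ≥0∞}
    (hX : UniformlyTendstoZeroInProbability P (𝓝[>] 0) X)
    (hX_meas : ∀ i, Measurable fun z : Ω i × ℝ => X i z.2 z.1) {E : ∀ i, Ω i → ℝ≥0∞}
    (hE : UniformlyBoundedInProbability P E) {C : ℝ≥0∞} (hC : C ≠ ⊤)
    (hXE : ∀ i ω, ∀ δ > 0, X i δ ω ≤ C * E i ω) :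
    UniformlyTendstoZeroInProbability P (𝓝[>] 0)
      fun i h ω => ⨍⁻ δ in Set.Ioc 0 h, X i δ ω ∂volume := by
  intro ε hε
  refine tendsto_iSup_zero_iff.2 fun r hr => ?_
  have hr₂ : 0 < r / 2 := ENNReal.half_pos hr.ne'
  obtain ⟨N, hN⟩ := (tendsto_iSup_zero_iff.1 hE (r / 2) hr₂).exists
  have hε₂ : 0 < ENNReal.ofReal ε * (r / 2) / 2 :=
    ENNReal.half_pos (mul_ne_zero (ENNReal.ofReal_pos.2 hε).ne' hr₂.ne')
  obtain ⟨a, -, ha_pos, ha⟩ := ENNReal.lt_iff_exists_real_btwn.1 hε₂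
  obtain ⟨r', hr'_pos, hr'⟩ := ENNReal.exists_nnreal_pos_mul_lt
    (ENNReal.mul_ne_top hC ENNReal.ofReal_ne_top : C * .ofReal N ≠ ⊤) hε₂.ne'
  obtain ⟨h₀, hh₀, hX_small⟩ := mem_nhdsGT_iff_exists_Ioo_subset.1 <|
    tendsto_iSup_zero_iff.1 (hX a (ENNReal.ofReal_pos.1 ha_pos)) r' (by simpa using hr'_pos)
  filter_upwards [Ioo_mem_nhdsGT hh₀] with h hh i
  have hmarkov := mul_measure_lt_setLAverage_le (P := P i) (μ := volume) (s := Set.Ioc 0 h)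
    (a := .ofReal a) measurableSet_Ioc (by simpa using hh.1) (by simp) (hX_meas i)
    (fun δ hδ => hX_small ⟨hδ.1, hδ.2.trans_lt hh.2⟩ i) (C * .ofReal N) (.ofReal ε)
  calc P i {ω | .ofReal ε < ⨍⁻ δ in Set.Ioc 0 h, X i δ ω ∂volume}
    _ ≤ P i ({ω | .ofReal N < E i ω} ∪ {ω | (∀ δ ∈ Set.Ioc 0 h, X i δ ω ≤ C * .ofReal N) ∧
          .ofReal ε < ⨍⁻ δ in Set.Ioc 0 h, X i δ ω ∂volume}) := by
        refine measure_mono fun ω hω => (lt_or_ge (.ofReal N) (E i ω)).imp_right fun hEN => ?_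
        exact ⟨fun δ hδ => (hXE i ω δ hδ.1).trans (by gcongr), hω⟩
    _ ≤ r / 2 + r / 2 := by
        refine (measure_union_le _ _).trans (add_le_add (hN i) ?_)
        refine (ENNReal.mul_le_mul_iff_right (ENNReal.ofReal_pos.2 hε).ne'
          ENNReal.ofReal_ne_top).1 (hmarkov.trans ?_)
        rw [← ENNReal.add_halves (ENNReal.ofReal ε * (r / 2)), mul_comm (C * _)]
        exact add_le_add ha.le hr'.le
    _ = r := ENNReal.add_halves r

theorem ofReal_one_sub_le_measure {Ω : Type*} [MeasurableSpace Ω] {P : Measure Ω}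
    [IsProbabilityMeasure P] {ε : ℝ} (hε : 0 ≤ ε) {G : Set Ω} (hG : P Gᶜ ≤ .ofReal ε) :
    .ofReal (1 - ε) ≤ P G := by
  rw [ENNReal.ofReal_sub _ hε, ENNReal.ofReal_one, tsub_le_iff_right, ← measure_univ (μ := P),
    ← Set.union_compl_self G]
  exact (measure_union_le _ _).trans (by gcongr)

end InProbability

section Tightness

variable {V H Y : Type*} [NormedAddCommGroup V] [NormedSpace ℝ V] [MeasurableSpace V]
  [BorelSpace V] [NormedAddCommGroup H] [NormedSpace ℝ H] [NormedAddCommGroup Y]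
  [NormedSpace ℝ Y] {e : V →L[ℝ] H} {j : H →L[ℝ] Y} {p T : ℝ}

theorem memLp_comp_of_isCompactOperator {α : Type*} [MeasurableSpace α] {μ : Measure α}
    (he : IsCompactOperator e) (hp : 0 < p) {v : α → V} (hv : Measurable v)
    (hfin : ∫⁻ t, ‖v t‖ₑ ^ p ∂μ < ⊤) : MemLp (fun t => e (v t)) (.ofReal p) μ := by
  refine ⟨(stronglyMeasurable_of_isCompactOperator he hv).aestronglyMeasurable, ?_⟩
  rw [eLpNorm_lt_top_iff_lintegral_rpow_enorm_lt_top (by simpa) ENNReal.ofReal_ne_top,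
    ENNReal.toReal_ofReal hp.le]
  exact (lintegral_enorm_clm_rpow_le e hp.le μ v).trans_lt
    (ENNReal.mul_lt_top (by finiteness) hfin)

theorem uniformlyTendstoZeroInProbability_laverage_translationDefect {ι : Type*} {Ω : ι → Type*}
    [∀ i, MeasurableSpace (Ω i)] {P : ∀ i, Measure (Ω i)} [∀ i, IsProbabilityMeasure (P i)]
    {X : ∀ i, Ω i → ℝ → V} (he : IsCompactOperator e) (hp : 1 ≤ p)
    (hmeas : ∀ i, Measurable fun q : Ω i × ℝ => X i q.1 q.2)
    (hbdd : UniformlyBoundedInProbability P fun i ω => ∫⁻ t in Set.Ioc 0 T, ‖X i ω t‖ₑ ^ p)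
    (htrans : UniformlyTendstoZeroInProbability P (𝓝[>] 0) fun i δ ω =>
      translationDefect p T δ fun t => j (e (X i ω t))) :
    UniformlyTendstoZeroInProbability P (𝓝[>] 0) fun i h ω =>
      ⨍⁻ δ in Set.Ioc 0 h, translationDefect p T δ (fun t => j (e (X i ω t))) ∂volume := by
  have hp₀ : 0 ≤ p := by linarith
  have hX (i : ι) (ω : Ω i) : Measurable (X i ω) := (hmeas i).comp measurable_prodMk_left
  refine htrans.laverage (fun i => measurable_translationDefect
    (u := fun ω t => j (e (X i ω t)))
    (stronglyMeasurable_comp_of_isCompactOperator he j (hmeas i)) p T) hbdd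
    (C := 2 ^ (p - 1) * 2 * ‖j.comp e‖ₑ ^ p) ?_ fun i ω δ hδ => ?_
  · have : 0 ≤ p - 1 := by linarith
    finiteness
  · rw [mul_assoc]
    refine (translationDefect_le hp hδ.le T
      (stronglyMeasurable_comp_of_isCompactOperator he j (hX i ω))).trans ?_
    gcongr
    exact lintegral_enorm_clm_rpow_le (j.comp e) hp₀ _ (X i ω)

theorem exists_isCompact_lpImage_translationDefect_le_subset [Fact (1 ≤ ENNReal.ofReal p)]
    (he : IsCompactOperator e) (hj : Function.Injective j) (hT : 0 < T) {N : ℝ≥0∞}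
    (hN : N ≠ ⊤) {n : ℕ → ℕ} (hn : ∀ k, n k ≠ 0) {θ : ℕ → ℝ} (hθ : Tendsto θ atTop (𝓝 0)) :
    ∃ K, IsCompact K ∧ lpImage (.ofReal p) (volume.restrict (Set.Ioc 0 T)) e
      {v | Measurable v ∧ ∫⁻ t in Set.Ioc 0 T, ‖v t‖ₑ ^ p ≤ N ∧
        ∀ k, ⨍⁻ δ in Set.Ioc 0 (T / n k),
          translationDefect p T δ (fun t => j (e (v t))) ∂volume ≤ .ofReal (θ k)} ⊆ K := by
  refine exists_isCompact_lpImage_subset he (fun v hv => hv.1) hN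
    (fun v hv => hv.2.1) (totallyBounded_lpImage (j := j) he hj hT (fun v hv => hv.1)
      hN (fun v hv => hv.2.1) fun r hr => ?_)
  have hθ' : Tendsto (fun k => ENNReal.ofReal (θ k)) atTop (𝓝 0) := by
    simpa using ENNReal.tendsto_ofReal hθ
  obtain ⟨k, hk⟩ := (hθ'.eventually_le_const hr.bot_lt).exists
  exact ⟨n k, hn k, fun v hv => (hv.2.2 k).trans hk⟩

end Tightness

theorem stmt_8_general {V H Yb : Type*}
    [NormedAddCommGroup V] [NormedSpace ℝ V] [MeasurableSpace V] [BorelSpace V]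
    [NormedAddCommGroup H] [NormedSpace ℝ H] [NormedAddCommGroup Yb] [NormedSpace ℝ Yb]
    (eVH : V →L[ℝ] H) (hcpt : IsCompactOperator eVH)
    (eHY : H →L[ℝ] Yb) (heHY : Function.Injective eHY)
    (p : ℝ) [Fact (1 ≤ ENNReal.ofReal p)] (T : ℝ) (hT : 0 < T)
    {ι : Type*} {Ω : ι → Type*} [∀ i, MeasurableSpace (Ω i)]
    (P : ∀ i, Measure (Ω i)) [∀ i, IsProbabilityMeasure (P i)]
    (Y : ∀ i, Ω i → ℝ → V)
    (hmeas : ∀ i, Measurable fun q : Ω i × ℝ => Y i q.1 q.2)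
    (hi : UniformlyBoundedInProbability P fun i ω => ∫⁻ t in Set.Ioc 0 T, ‖Y i ω t‖ₑ ^ p)
    (hii : UniformlyTendstoZeroInProbability P (𝓝[>] 0) fun i δ ω =>
      translationDefect p T δ fun t => eHY (eVH (Y i ω t))) :
    ∀ ε > (0 : ℝ), ∃ K : Set (Lp H (.ofReal p) (volume.restrict (Set.Ioc 0 T))),
      IsCompact K ∧ ∀ i, .ofReal (1 - ε) ≤
        P i {ω | ∃ g ∈ K, g =ᵐ[volume.restrict (Set.Ioc 0 T)] fun t => eVH (Y i ω t)} := by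
  intro ε hε
  have hp : 1 ≤ p := ENNReal.one_le_ofReal.1 Fact.out
  have hε₂ : 0 < ENNReal.ofReal ε / 2 := ENNReal.half_pos (ENNReal.ofReal_pos.2 hε).ne'
  have hmesh : Tendsto (fun n : ℕ => T / (n + 1 : ℕ)) atTop (𝓝[>] 0) :=
    tendsto_nhdsWithin_iff.2 ⟨(tendsto_const_div_atTop_nhds_zero_nat T).comp
      (tendsto_add_atTop_nat 1), .of_forall fun n => div_pos hT (by positivity)⟩
  obtain ⟨N, hN⟩ := (tendsto_iSup_zero_iff.1 hi _ hε₂).exists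
  obtain ⟨n, hn⟩ := ((uniformlyTendstoZeroInProbability_laverage_translationDefect hcpt hp hmeas
    hi hii).comp hmesh).exists_seq (fun k : ℕ => Nat.one_div_pos_of_nat) hε₂.ne'
  obtain ⟨K, hK, hVK⟩ := exists_isCompact_lpImage_translationDefect_le_subset (p := p) hcpt heHY
    hT ENNReal.ofReal_ne_top (fun k => (n k).succ_ne_zero) tendsto_one_div_add_atTop_nhds_zero_nat
  refine ⟨K, hK, fun i => ofReal_one_sub_le_measure hε.le ?_⟩
  rw [← ENNReal.add_halves (ENNReal.ofReal ε)]
  refine ((measure_mono fun ω hω => ?_).trans (measure_union_le _ _)).trans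
    (add_le_add (hN i) (hn i))
  by_contra! hgood
  simp only [Set.mem_union, Set.mem_ofPred_eq, not_or, not_exists, not_lt] at hgood
  have hYω : Measurable (Y i ω) := (hmeas i).comp measurable_prodMk_left
  have hLp := memLp_comp_of_isCompactOperator hcpt (zero_lt_one.trans_le hp) hYω
    (hgood.1.trans_lt ENNReal.ofReal_lt_top)
  exact hω ⟨hLp.toLp, hVK ⟨Y i ω, ⟨hYω, hgood⟩, hLp.coeFn_toLp⟩, hLp.coeFn_toLp⟩

/-- Lemma 5.2 of [MRSSTZ]: given continuous embeddings `V ⊂ H ⊂ Y` with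
`V ⊂ H` compact, if the processes `Y_m` satisfy the uniform `L^p(0,T;V)`
boundedness in probability (i) and the uniform time-translation estimate in
the `Y`-norm (ii), then the laws of `Y_m`, regarded as random elements of
`L^p(0,T;H)`, form a tight family. -/
theorem stmt_8 {V H Yb : Type*}
    [NormedAddCommGroup V] [NormedSpace ℝ V] [MeasurableSpace V] [BorelSpace V]
    [NormedAddCommGroup H] [NormedSpace ℝ H] [TopologicalSpace.SeparableSpace H]
    [NormedAddCommGroup Yb] [NormedSpace ℝ Yb]
    (eVH : V →L[ℝ] H) (heVH : Function.Injective eVH) (hcpt : IsCompactOperator eVH)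
    (eHY : H →L[ℝ] Yb) (heHY : Function.Injective eHY)
    (p : ℝ) (hp : 1 ≤ p) [Fact (1 ≤ ENNReal.ofReal p)] (T : ℝ) (hT : 0 < T)
    {Ω : ℕ → Type*} [∀ m, MeasurableSpace (Ω m)]
    (P : ∀ m, Measure (Ω m)) [∀ m, IsProbabilityMeasure (P m)]
    (Y : ∀ m, Ω m → ℝ → V)
    (hmeas : ∀ m, Measurable fun q : Ω m × ℝ => Y m q.1 q.2)
    (hfin : ∀ m, ∀ᵐ ω ∂(P m),
      (∫⁻ t in Set.Ioc (0:ℝ) T, (‖Y m ω t‖₊ : ℝ≥0∞) ^ p) < ⊤)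
    -- (i)
    (hi : Tendsto (fun N : ℝ => ⨆ m, P m {ω | ENNReal.ofReal N <
        ∫⁻ t in Set.Ioc (0:ℝ) T, (‖Y m ω t‖₊ : ℝ≥0∞) ^ p}) atTop (𝓝 0))
    -- (ii)
    (hii : ∀ ε > (0:ℝ), Tendsto (fun δ : ℝ => ⨆ m, P m {ω | ENNReal.ofReal ε <
        ∫⁻ t in Set.Ioc (0:ℝ) (T - δ),
          (‖eHY (eVH (Y m ω (t + δ))) - eHY (eVH (Y m ω t))‖₊ : ℝ≥0∞) ^ p})
        (𝓝[>] 0) (𝓝 0)) :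
    ∀ ε > (0:ℝ),
      ∃ K : Set (Lp H (ENNReal.ofReal p) (volume.restrict (Set.Ioc (0:ℝ) T))),
        IsCompact K ∧ ∀ m, ENNReal.ofReal (1 - ε) ≤
          P m {ω | ∃ g ∈ K,
            ⇑g =ᵐ[volume.restrict (Set.Ioc (0:ℝ) T)] fun t => eVH (Y m ω t)} := by
  exact stmt_8_general eVH hcpt eHY heHY p T hT P Y hmeas hi hii
end

section
/- Let 1 ≤ p < ∞ and T > 0. Let V, H, Y be Banach spaces with continuous embeddings V ⊂ H ⊂ Y such that the embedding V ⊂ H is compact. If Γ is a bounded subset of L^p(0,T;V) satisfying lim_{δ→0⁺} sup_{f∈Γ} ∫₀^{T−δ} ‖f(t+δ) − f(t)‖_Y^p dt = 0, then Γ is a relatively compact subset of L^p(0,T;H). -/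
open Filter Topology MeasureTheory
open scoped ENNReal

/-!
Cut `(0, T]` into cells of length `h` and replace `f` on the cell starting at `k h` by the sampled
value `f (k h + σ)`. Averaged over the offset `σ ∈ (0, h]`, the `p`-th power of the distance in `Y`
from `f` to this step function is at most twice the largest `p`-th power of a translation difference
of `f` with `|δ| ≤ h`, and the `p`-th power of the norm of the step function in `L^p(V)` is
similarly controlled by that of `f`. Hence one `σ` serves both bounds, and Ehrling's inequality
`‖x‖_H ≤ η ‖x‖_V + C_η ‖x‖_Y` turns closeness in `L^p(Y)` into closeness in `L^p(H)`. The step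
functions with a fixed finite set of cells and a bounded norm in `L^p(V)` are totally bounded in
`L^p(H)`, because `V ⊂ H` is compact; so the image of `Γ` is totally bounded.

Limits are taken in `L^p` of the completion of `H`. By Fatou, almost every `t` has a subsequence
along which the approximating values are bounded in `V`, so by compactness of `V ⊂ H` the limit
is almost everywhere `H`-valued, and the closure of the image of `Γ` is compact in `L^p(H)` itself.
-/

section Ehrling

variable {V H Y : Type*} [NormedAddCommGroup V] [NormedSpace ℝ V]
  [NormedAddCommGroup H] [NormedSpace ℝ H] [NormedAddCommGroup Y] [NormedSpace ℝ Y]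

lemma exists_norm_le_add_mul_norm_of_isCompact {K : Set H} (hK : IsCompact K) {B : H →L[ℝ] Y}
    (hB : Function.Injective B) {η : ℝ} (hη : 0 < η) :
    ∃ C > 0, ∀ y ∈ K, ‖y‖ ≤ η + C * ‖B y‖ := by
  obtain ⟨M, hM, hKM⟩ := hK.isBounded.exists_pos_norm_le
  have hK' : IsCompact (K ∩ {y | η ≤ ‖y‖}) :=
    hK.inter_right (isClosed_le continuous_const continuous_norm)
  have hpos : ∀ y ∈ K ∩ {y | η ≤ ‖y‖}, 0 < ‖B y‖ := fun y hy =>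
    norm_pos_iff.2 <| (map_ne_zero_iff B hB).2 <| norm_pos_iff.1 <| hη.trans_le hy.2
  obtain ⟨c, hc, hcB⟩ := hK'.exists_forall_le' B.continuous.norm.continuousOn hpos
  refine ⟨M / c, by positivity, fun y hy => ?_⟩
  rcases le_total ‖y‖ η with hle | hge
  · exact hle.trans (le_add_of_nonneg_right (by positivity))
  · calc ‖y‖ ≤ M / c * c := by rw [div_mul_cancel₀ _ hc.ne']; exact hKM y hy
      _ ≤ M / c * ‖B y‖ := by gcongr; exact hcB y ⟨hy, hge⟩
      _ ≤ η + M / c * ‖B y‖ := le_add_of_nonneg_left hη.le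

lemma exists_norm_le_mul_norm_add_mul_norm {A : V →L[ℝ] H} (hA : IsCompactOperator A)
    {B : H →L[ℝ] Y} (hB : Function.Injective B) {η : ℝ} (hη : 0 < η) :
    ∃ C > 0, ∀ x, ‖A x‖ ≤ η * ‖x‖ + C * ‖B (A x)‖ := by
  obtain ⟨K, hK, hAK⟩ := hA.image_closedBall_subset_compact (f := (A : V →ₗ[ℝ] H)) 1
  obtain ⟨C, hC, hCK⟩ := exists_norm_le_add_mul_norm_of_isCompact hK hB hη
  refine ⟨C, hC, fun x => ?_⟩
  obtain rfl | hx := eq_or_ne x 0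
  · simp
  have hx' : 0 < ‖x‖ := norm_pos_iff.2 hx
  have hunit := hCK (A (‖x‖⁻¹ • x)) <| hAK ⟨‖x‖⁻¹ • x, by simp [norm_smul, hx'.ne'], rfl⟩
  simp only [map_smul, norm_smul, norm_inv, norm_norm] at hunit
  calc ‖A x‖ = ‖x‖ * (‖x‖⁻¹ * ‖A x‖) := (mul_inv_cancel_left₀ hx'.ne' _).symm
    _ ≤ ‖x‖ * (η + C * (‖x‖⁻¹ * ‖B (A x)‖)) := by gcongr
    _ = η * ‖x‖ + C * ‖B (A x)‖ := by field_simp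

lemma exists_eLpNorm_le_mul_eLpNorm_add_mul_eLpNorm {α : Type*} [MeasurableSpace α]
    {μ : Measure α} {p : ℝ≥0∞} (hp : 1 ≤ p) {A : V →L[ℝ] H} (hA : IsCompactOperator A)
    {B : H →L[ℝ] Y} (hB : Function.Injective B) {η : ℝ} (hη : 0 < η) :
    ∃ C > 0, ∀ f : α → V, AEStronglyMeasurable f μ →
      eLpNorm (fun t => A (f t)) p μ ≤ ENNReal.ofReal η * eLpNorm f p μ +
        ENNReal.ofReal C * eLpNorm (fun t => B (A (f t))) p μ := by
  obtain ⟨C, hC, hAB⟩ := exists_norm_le_mul_norm_add_mul_norm hA hB hη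
  refine ⟨C, hC, fun f hf => ?_⟩
  have hBA : AEStronglyMeasurable (fun t => B (A (f t))) μ :=
    (B.comp A).continuous.comp_aestronglyMeasurable hf
  calc eLpNorm (fun t => A (f t)) p μ
      ≤ eLpNorm ((η • fun t => ‖f t‖) + C • fun t => ‖B (A (f t))‖) p μ :=
        eLpNorm_mono_real fun t => hAB (f t)
    _ ≤ eLpNorm (η • fun t => ‖f t‖) p μ + eLpNorm (C • fun t => ‖B (A (f t))‖) p μ :=
        eLpNorm_add_le (hf.norm.const_smul η) (hBA.norm.const_smul C) hp
    _ = ENNReal.ofReal η * eLpNorm f p μ +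
        ENNReal.ofReal C * eLpNorm (fun t => B (A (f t))) p μ := by
        simp only [eLpNorm_const_smul, eLpNorm_norm, Real.enorm_eq_ofReal hη.le,
          Real.enorm_eq_ofReal hC.le]

end Ehrling

/-- The set of classes in `L^p(μ; H)` of the functions `A ∘ f` with `f ∈ Γ`, where `A` is a map such
as the embedding `V ⊂ H`. The members of `Γ` are functions rather than elements of an `Lp` space;
those for which `A ∘ f` is not in `L^p` contribute nothing. -/
def compLpImage {α V H : Type*} [MeasurableSpace α] [NormedAddCommGroup H] (A : V → H)
    (p : ℝ≥0∞) (μ : Measure α) (Γ : Set (α → V)) : Set (Lp H p μ) :=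
  {g | ∃ f ∈ Γ, g =ᵐ[μ] fun t => A (f t)}

section RelativeCompactness

variable {α V H E : Type*} [MeasurableSpace α] {μ : Measure α} {p : ℝ≥0∞}
  [NormedAddCommGroup V]

lemma ae_liminf_enorm_lt_top {R : ℝ≥0∞} (hR : R ≠ ⊤) (hp : p ≠ 0) {f : ℕ → α → V}
    (hf : ∀ n, AEStronglyMeasurable (f n) μ) (hfR : ∀ n, eLpNorm (f n) p μ ≤ R) :
    ∀ᵐ t ∂μ, liminf (fun n => ‖f n t‖ₑ) atTop < ⊤ := by
  lift R to NNReal using hR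
  have hmk : ∀ n, (hf n).mk (f n) =ᵐ[μ] f n := fun n => (hf n).ae_eq_mk.symm
  have hliminf := ae_bdd_liminf_atTop_of_eLpNorm_bdd (R := R) hp
    (f := fun n t => ‖(hf n).mk (f n) t‖)
    (fun n => (hf n).stronglyMeasurable_mk.norm.measurable)
    (fun n => by rw [eLpNorm_norm, eLpNorm_congr_ae (hmk n)]; exact hfR n)
  filter_upwards [hliminf, ae_all_iff.2 hmk] with t ht hmk_t
  simpa only [hmk_t, enorm_norm] using ht

variable [NormedSpace ℝ V] [NormedAddCommGroup H] [NormedSpace ℝ H]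
  [NormedAddCommGroup E] [NormedSpace ℝ E]

lemma isometry_compLpL [Fact (1 ≤ p)] (ι : H →ₗᵢ[ℝ] E) :
    Isometry (ι.toContinuousLinearMap.compLpL p μ) := by
  refine AddMonoidHomClass.isometry_of_norm _ fun g => ?_
  rw [Lp.norm_def, Lp.norm_def]
  congr 1
  refine eLpNorm_congr_norm_ae ?_
  filter_upwards [ι.toContinuousLinearMap.coeFn_compLpL g] with t ht
  rw [ht]
  exact ι.norm_map (g t)

lemma mem_range_compLpL_of_ae_mem_range [Fact (1 ≤ p)] (ι : H →ₗᵢ[ℝ] E) {G : Lp E p μ}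
    (hG : ∀ᵐ t ∂μ, G t ∈ Set.range ι) :
    G ∈ Set.range (ι.toContinuousLinearMap.compLpL p μ) := by
  set w : α → H := fun t => Function.invFun ι (G t)
  have hw : (fun t => ι (w t)) =ᵐ[μ] G := hG.mono fun t ht => Function.invFun_eq ht
  have hw_meas : AEStronglyMeasurable w μ :=
    ι.isometry.isEmbedding.aestronglyMeasurable_comp_iff.1 <|
      (Lp.aestronglyMeasurable G).congr hw.symm
  have hw_memLp : MemLp w p μ :=
    (Lp.memLp G).of_le hw_meas <| hw.mono fun t ht => by rw [← ht, ι.norm_map]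
  refine ⟨hw_memLp.toLp w, Lp.ext ?_⟩
  filter_upwards [ι.toContinuousLinearMap.coeFn_compLpL (hw_memLp.toLp w), hw_memLp.coeFn_toLp,
    hw] with t hcomp htoLp ht
  rw [hcomp, htoLp, ← ht]
  rfl

lemma exists_tendsto_subseq_of_liminf_enorm_lt_top {A : V →L[ℝ] H} (hA : IsCompactOperator A)
    {x : ℕ → V} (hx : liminf (fun n => ‖x n‖ₑ) atTop < ⊤) :
    ∃ y, ∃ φ : ℕ → ℕ, StrictMono φ ∧ Tendsto (fun n => A (x (φ n))) atTop (𝓝 y) := by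
  obtain ⟨r, hxr, hr⟩ := exists_between hx
  obtain ⟨φ, hφ, hφr⟩ :=
    extraction_of_frequently_atTop (frequently_lt_of_liminf_lt (by isBoundedDefault) hxr)
  obtain ⟨K, hK, hAK⟩ := hA.image_closedBall_subset_compact (f := (A : V →ₗ[ℝ] H)) r.toReal
  have hmem : ∀ n, A (x (φ n)) ∈ K := fun n => hAK
    ⟨x (φ n), mem_closedBall_zero_iff.2 <| by
      simpa using ENNReal.toReal_mono hr.ne (hφr n).le, rfl⟩
  obtain ⟨y, -, θ, hθ, hy⟩ := hK.tendsto_subseq hmem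
  exact ⟨y, φ ∘ θ, hφ.comp hθ, hy⟩

variable [Fact (1 ≤ p)] {A : V →L[ℝ] H} {Γ : Set (α → V)} {R : ℝ≥0∞}

lemma ae_mem_range_of_mem_closure_compLpL_image (hA : IsCompactOperator A) (hR : R ≠ ⊤)
    (hΓ : ∀ f ∈ Γ, AEStronglyMeasurable f μ) (hΓR : ∀ f ∈ Γ, eLpNorm f p μ ≤ R)
    (ι : H →ₗᵢ[ℝ] E) {G : Lp E p μ}
    (hG : G ∈ closure (ι.toContinuousLinearMap.compLpL p μ '' compLpImage A p μ Γ)) :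
    ∀ᵐ t ∂μ, G t ∈ Set.range ι := by
  obtain ⟨u, hu, hlim⟩ := mem_closure_iff_seq_limit.1 hG
  choose g hgΓ hgu using hu
  choose f hfΓ hgf using hgΓ
  obtain ⟨ns, -, hns_lim⟩ := (tendstoInMeasure_of_tendsto_Lp hlim).exists_seq_tendsto_ae
  have hu_eq : ∀ᵐ t ∂μ, ∀ n, u n t = ι (A (f n t)) := by
    refine ae_all_iff.2 fun n => ?_
    filter_upwards [ι.toContinuousLinearMap.coeFn_compLpL (g n), hgf n] with t hcomp hgf_t
    rw [← hgu n, hcomp, hgf_t]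
    rfl
  have hliminf : ∀ᵐ t ∂μ, liminf (fun n => ‖f (ns n) t‖ₑ) atTop < ⊤ :=
    ae_liminf_enorm_lt_top hR (zero_lt_one.trans_le Fact.out).ne' (fun n => hΓ _ (hfΓ (ns n)))
      fun n => hΓR _ (hfΓ (ns n))
  filter_upwards [hu_eq, hns_lim, hliminf] with t hu_t hlim_t hliminf_t
  obtain ⟨y, φ, hφ, hy⟩ := exists_tendsto_subseq_of_liminf_enorm_lt_top hA hliminf_t
  refine ⟨y, tendsto_nhds_unique ((ι.continuous.tendsto y).comp hy) ?_⟩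
  exact (hlim_t.comp hφ.tendsto_atTop).congr fun n => hu_t _

lemma isCompact_closure_compLpImage_of_totallyBounded (hA : IsCompactOperator A) (hR : R ≠ ⊤)
    (hΓ : ∀ f ∈ Γ, AEStronglyMeasurable f μ) (hΓR : ∀ f ∈ Γ, eLpNorm f p μ ≤ R)
    (hbdd : TotallyBounded (compLpImage A p μ Γ)) :
    IsCompact (closure (compLpImage A p μ Γ)) := by
  let ι : H →ₗᵢ[ℝ] UniformSpace.Completion H := UniformSpace.Completion.toComplₗᵢ
  have hiso := isometry_compLpL (μ := μ) (p := p) ι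
  have hind := hiso.isUniformInducing.isInducing
  rw [hind.closure_eq_preimage_closure_image]
  refine hind.isCompact_preimage' ?_ fun G hG => mem_range_compLpL_of_ae_mem_range ι <|
    ae_mem_range_of_mem_closure_compLpL_image hA hR hΓ hΓR ι hG
  exact (hbdd.image hiso.uniformContinuous).closure.isCompact_of_isClosed isClosed_closure

end RelativeCompactness

section TotalBoundedness

lemma totallyBounded_of_forall_dist_le {X : Type*} [PseudoMetricSpace X] {s : Set X}
    (h : ∀ ε > 0, ∃ K : Set X, TotallyBounded K ∧ ∀ x ∈ s, ∃ y ∈ K, dist x y ≤ ε) :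
    TotallyBounded s := by
  refine Metric.totallyBounded_iff.2 fun ε hε => ?_
  obtain ⟨K, hK, hsK⟩ := h (ε / 2) (half_pos hε)
  obtain ⟨t, ht, hKt⟩ := Metric.totallyBounded_iff.1 hK (ε / 2) (half_pos hε)
  refine ⟨t, ht, fun x hx => ?_⟩
  obtain ⟨y, hy, hxy⟩ := hsK x hx
  obtain ⟨z, hz, hyz⟩ := Set.mem_iUnion₂.1 (hKt hy)
  refine Set.mem_iUnion₂.2 ⟨z, hz, ?_⟩
  calc dist x z ≤ dist x y + dist y z := dist_triangle x y z
    _ < ε / 2 + ε / 2 := add_lt_add_of_le_of_lt hxy hyz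
    _ = ε := add_halves ε

variable {α V H : Type*} [MeasurableSpace α] {μ : Measure α} {p : ℝ≥0∞}
  [NormedAddCommGroup H]

lemma totallyBounded_compLpImage_of_approx [Fact (1 ≤ p)] {A : V → H} {Γ : Set (α → V)}
    (h : ∀ ε > 0, ∃ Δ : Set (α → V), TotallyBounded (compLpImage A p μ Δ) ∧
      ∀ f ∈ Γ, ∃ u ∈ Δ, MemLp (fun t => A (u t)) p μ ∧
        eLpNorm (fun t => A (f t) - A (u t)) p μ ≤ ENNReal.ofReal ε) :
    TotallyBounded (compLpImage A p μ Γ) := by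
  refine totallyBounded_of_forall_dist_le fun ε hε => ?_
  obtain ⟨Δ, hΔ, hΓΔ⟩ := h ε hε
  refine ⟨_, hΔ, ?_⟩
  rintro g ⟨f, hf, hgf⟩
  obtain ⟨u, hu, hu_memLp, hfu⟩ := hΓΔ f hf
  refine ⟨hu_memLp.toLp _, ⟨u, hu, hu_memLp.coeFn_toLp⟩, ?_⟩
  rw [← edist_le_ofReal hε.le, Lp.edist_def]
  exact (eLpNorm_congr_ae (hgf.sub hu_memLp.coeFn_toLp)).trans_le hfu

variable [NormedAddCommGroup V] {ι : Type*} [MeasurableSpace ι] [MeasurableSingletonClass ι]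
  {κ : α → ι}

lemma enorm_mul_measure_preimage_rpow_le_eLpNorm (hκ : Measurable κ) (hp₀ : p ≠ 0) (hp : p ≠ ⊤)
    (c : ι → V) (i : ι) :
    ‖c i‖ₑ * μ (κ ⁻¹' {i}) ^ (1 / p.toReal) ≤ eLpNorm (c ∘ κ) p μ := by
  rw [← eLpNorm_indicator_const (hκ (measurableSet_singleton i)) hp₀ hp]
  refine eLpNorm_mono_enorm fun t => ?_
  by_cases ht : κ t = i <;> simp [ht]

variable [Finite ι]

lemma memLp_comp_of_finite_s9 [IsFiniteMeasure μ] (hκ : Measurable κ) (d : ι → H) :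
    MemLp (d ∘ κ) p μ := by
  obtain ⟨C, hC⟩ := (Set.finite_range fun i => ‖d i‖).bddAbove
  exact .of_bound (StronglyMeasurable.of_discrete.comp_measurable hκ).aestronglyMeasurable C
    (.of_forall fun t => hC ⟨κ t, rfl⟩)

lemma continuous_toLp_comp_of_finite [Fact (1 ≤ p)] [IsFiniteMeasure μ] (hκ : Measurable κ) :
    Continuous fun d : ι → H => (memLp_comp_of_finite_s9 (p := p) (μ := μ) hκ d).toLp (d ∘ κ) := by
  have := Fintype.ofFinite ι
  have hC : μ Set.univ ^ p.toReal⁻¹ ≠ ⊤ :=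
    ENNReal.rpow_ne_top_of_nonneg (by positivity) (measure_ne_top μ _)
  refine (LipschitzWith.continuous (K := (μ Set.univ ^ p.toReal⁻¹).toNNReal) fun d d' => ?_)
  rw [Lp.edist_toLp_toLp, ENNReal.coe_toNNReal hC, mul_comm]
  refine eLpNorm_le_of_ae_enorm_bound (.of_forall fun t => ?_)
  rw [Pi.sub_apply, ← edist_eq_enorm_sub]
  exact edist_le_pi_edist d d' (κ t)

lemma totallyBounded_compLpImage_comp_of_finite [NormedSpace ℝ V] [NormedSpace ℝ H]
    [Fact (1 ≤ p)] [IsFiniteMeasure μ] {A : V →L[ℝ] H} (hA : IsCompactOperator A)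
    (hp : p ≠ ⊤) (hκ : Measurable κ) {R : ℝ≥0∞} (hR : R ≠ ⊤) :
    TotallyBounded (compLpImage A p μ {u | ∃ c : ι → V, u = c ∘ κ ∧ eLpNorm u p μ ≤ R}) := by
  classical
  have hp₀ : p ≠ 0 := (zero_lt_one.trans_le Fact.out).ne'
  choose K hK hAK using fun i => hA.image_closedBall_subset_compact (f := (A : V →ₗ[ℝ] H))
    (R / μ (κ ⁻¹' {i}) ^ (1 / p.toReal)).toReal
  refine ((isCompact_univ_pi hK).image
    (continuous_toLp_comp_of_finite (p := p) (μ := μ) hκ)).totallyBounded.subset ?_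
  rintro g ⟨_, ⟨c, rfl, hcR⟩, hg⟩
  -- On null cells the bound on `c ∘ κ` says nothing about `c`.
  let c' : ι → V := fun i => if μ (κ ⁻¹' {i}) = 0 then 0 else c i
  have hc' : ∀ᵐ t ∂μ, c' (κ t) = c (κ t) := by
    have hnull : ∀ᵐ t ∂μ, ∀ i, μ (κ ⁻¹' {i}) = 0 → κ t ≠ i :=
      ae_all_iff.2 fun i => eventually_imp_distrib_left.2 measure_eq_zero_iff_ae_notMem.1
    filter_upwards [hnull] with t ht
    exact if_neg fun h => ht _ h rfl
  refine ⟨fun i => A (c' i), fun i _ => hAK i ⟨c' i, ?_, rfl⟩, Lp.ext ?_⟩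
  · rw [mem_closedBall_zero_iff]
    rcases eq_or_ne (μ (κ ⁻¹' {i})) 0 with hi | hi
    · simpa only [c', if_pos hi, norm_zero] using ENNReal.toReal_nonneg
    · have hi_rpow : μ (κ ⁻¹' {i}) ^ (1 / p.toReal) ≠ 0 := by simp [hi, measure_ne_top]
      simp only [c', if_neg hi]
      rw [← toReal_enorm]
      refine ENNReal.toReal_mono (ENNReal.div_ne_top hR hi_rpow) ?_
      rw [ENNReal.le_div_iff_mul_le (.inl hi_rpow) (.inr hR)]
      exact (enorm_mul_measure_preimage_rpow_le_eLpNorm hκ hp₀ hp c i).trans hcR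
  · refine (MemLp.coeFn_toLp _).trans ?_
    filter_upwards [hg, hc'] with t hgt hct
    rw [hgt, Function.comp_apply, hct, Function.comp_apply]

end TotalBoundedness

lemma setLIntegral_setLIntegral_add_le {G : Type*} [MeasurableSpace G] [AddCommGroup G]
    [MeasurableAdd₂ G] {μ : Measure G} [SFinite μ] [μ.IsAddLeftInvariant] {I S B : Set G}
    (hI : MeasurableSet I) (hS : MeasurableSet S) (hB : MeasurableSet B) {κ : G → G}
    (hκ : Measurable κ) (hκI : ∀ t ∈ I, ∀ σ ∈ S, κ t + σ ∈ I)
    (hκB : ∀ t ∈ I, ∀ σ ∈ S, κ t - t + σ ∈ B) {F : G → G → ℝ≥0∞}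
    (hF : Measurable (Function.uncurry F)) {e : ℝ≥0∞}
    (hFe : ∀ δ ∈ B, ∫⁻ t in I ∩ (· + δ) ⁻¹' I, F t (t + δ) ∂μ ≤ e) :
    ∫⁻ σ in S, ∫⁻ t in I, F t (κ t + σ) ∂μ ∂μ ≤ e * μ B := by
  -- For fixed `t` substitute `δ = κ t - t + σ`, so that `κ t + σ = t + δ`.
  let J : G → G → ℝ≥0∞ := fun t δ =>
    ((· + δ) ⁻¹' I).indicator (fun t => F t (t + δ)) t
  have hJ : Measurable (Function.uncurry J) :=
    (hF.comp (measurable_fst.prodMk measurable_add)).indicator (measurable_add hI)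
  have hshift : ∀ t ∈ I, ∫⁻ σ in S, F t (κ t + σ) ∂μ ≤ ∫⁻ δ in B, J t δ ∂μ := by
    intro t ht
    rw [← lintegral_indicator hS, ← lintegral_indicator hB,
      ← lintegral_add_left_eq_self (B.indicator (J t)) (κ t - t)]
    refine lintegral_mono (Set.indicator_le fun σ hσ => ?_)
    have hadd : t + (κ t - t + σ) = κ t + σ := by abel
    simp [J, hκB t ht σ hσ, hadd, hκI t ht σ hσ]
  calc ∫⁻ σ in S, ∫⁻ t in I, F t (κ t + σ) ∂μ ∂μ
      = ∫⁻ t in I, ∫⁻ σ in S, F t (κ t + σ) ∂μ ∂μ := lintegral_lintegral_swap <|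
        (hF.comp (measurable_snd.prodMk ((hκ.comp measurable_snd).add measurable_fst))).aemeasurable
    _ ≤ ∫⁻ t in I, ∫⁻ δ in B, J t δ ∂μ ∂μ := setLIntegral_mono' hI hshift
    _ = ∫⁻ δ in B, ∫⁻ t in I, J t δ ∂μ ∂μ := lintegral_lintegral_swap hJ.aemeasurable
    _ ≤ ∫⁻ _ in B, e ∂μ := setLIntegral_mono' hB fun δ hδ => by
        simp only [J]
        rw [setLIntegral_indicator (hI.preimage (measurable_add_const δ)), Set.inter_comm]
        exact hFe δ hδ
    _ = e * μ B := setLIntegral_const B e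

lemma exists_mem_le_two_mul_and_le_two_mul {α : Type*} [MeasurableSpace α] {μ : Measure α}
    {S : Set α} (hS₀ : μ S ≠ 0) (hS : μ S ≠ ⊤) {φ ψ : α → ℝ≥0∞}
    (hφ : Measurable φ) (hψ : Measurable ψ) {a b : ℝ≥0∞} (ha₀ : a ≠ 0) (ha : a ≠ ⊤)
    (hb₀ : b ≠ 0) (hb : b ≠ ⊤) (hφa : ∫⁻ x in S, φ x ∂μ ≤ a * μ S)
    (hψb : ∫⁻ x in S, ψ x ∂μ ≤ b * μ S) :
    ∃ x ∈ S, φ x ≤ 2 * a ∧ ψ x ≤ 2 * b := by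
  obtain ⟨x, hx, hle⟩ := exists_le_setLAverage (f := fun x => φ x / a + ψ x / b) hS₀ hS
    ((hφ.div_const a).add (hψ.div_const b)).aemeasurable
  have havg : φ x / a + ψ x / b ≤ 2 := by
    refine hle.trans ?_
    rw [setLAverage_eq, lintegral_add_left (hφ.div_const a)]
    simp only [div_eq_mul_inv]
    rw [lintegral_mul_const _ hφ, lintegral_mul_const _ hψ]
    simp only [← div_eq_mul_inv]
    refine ENNReal.div_le_of_le_mul ?_
    calc _ ≤ μ S + μ S := add_le_add (ENNReal.div_le_of_le_mul' hφa) (ENNReal.div_le_of_le_mul' hψb)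
      _ = 2 * μ S := (two_mul _).symm
  exact ⟨x, hx, (ENNReal.div_le_iff ha₀ ha).1 (le_self_add.trans havg),
    (ENNReal.div_le_iff hb₀ hb).1 (le_add_self.trans havg)⟩

section Cells

/-- The index of the cell of length `h` containing `t`, when `(0, (n + 1) h]` is cut into `n + 1`
cells; clamping puts the right end point into the last cell. -/
noncomputable def cellIndex (n : ℕ) (h t : ℝ) : Fin (n + 1) :=
  Fin.clamp ⌊t / h⌋₊ n

variable {n : ℕ} {h t : ℝ}

lemma measurable_cellIndex : Measurable (cellIndex n h) :=
  (measurable_of_countable fun k => Fin.clamp k n).comp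
    (Nat.measurable_floor.comp (measurable_id.div_const h))

lemma cellIndex_mul_le (hh : 0 < h) (ht : 0 ≤ t) : (cellIndex n h t : ℝ) * h ≤ t := by
  rw [← le_div_iff₀ hh]
  calc ((cellIndex n h t : ℕ) : ℝ) ≤ ⌊t / h⌋₊ := by exact_mod_cast min_le_left _ _
    _ ≤ t / h := Nat.floor_le (by positivity)

lemma le_cellIndex_add_one_mul (hh : 0 < h) (ht : t ≤ (n + 1) * h) :
    t ≤ (cellIndex n h t + 1) * h := by
  rw [← div_le_iff₀ hh] at ht ⊢
  rcases le_total ⌊t / h⌋₊ n with hle | hge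
  · simpa [cellIndex, Fin.clamp, hle] using (Nat.lt_floor_add_one (t / h)).le
  · simpa [cellIndex, Fin.clamp, hge] using ht

lemma cellIndex_mul_add_mem_Ioc (hh : 0 < h) {σ : ℝ} (hσ : σ ∈ Set.Ioc 0 h) :
    cellIndex n h t * h + σ ∈ Set.Ioc 0 ((n + 1) * h) := by
  have hidx : ((cellIndex n h t : ℕ) : ℝ) ≤ n := by exact_mod_cast Fin.is_le (cellIndex n h t)
  have := hσ.1
  refine ⟨by positivity, ?_⟩
  nlinarith [mul_le_mul_of_nonneg_right hidx hh.le, hσ.2]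

lemma cellIndex_mul_sub_add_mem_Icc (hh : 0 < h) (ht : t ∈ Set.Ioc 0 ((n + 1) * h)) {σ : ℝ}
    (hσ : σ ∈ Set.Ioc 0 h) : cellIndex n h t * h - t + σ ∈ Set.Icc (-h) h := by
  have hle := cellIndex_mul_le (n := n) hh ht.1.le
  have hge := le_cellIndex_add_one_mul hh ht.2
  constructor <;> linarith [hσ.1, hσ.2]

lemma measurable_cellIndex_mul : Measurable fun t => (cellIndex n h t : ℝ) * h :=
  ((measurable_of_countable fun i : Fin (n + 1) => (i : ℝ)).comp measurable_cellIndex).mul_const h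

variable {F G : ℝ → ℝ → ℝ≥0∞} {a b : ℝ≥0∞}

lemma measurable_setLIntegral_cellIndex_mul_add (hF : Measurable (Function.uncurry F)) :
    Measurable fun σ => ∫⁻ t in Set.Ioc 0 ((n + 1) * h), F t (cellIndex n h t * h + σ) :=
  (hF.comp (measurable_snd.prodMk
    ((measurable_cellIndex_mul.comp measurable_snd).add measurable_fst))).lintegral_prod_right'

lemma setLIntegral_setLIntegral_cellIndex_mul_add_le (hh : 0 < h)
    (hF : Measurable (Function.uncurry F))
    (hFa : ∀ δ ∈ Set.Icc (-h) h,
      ∫⁻ t in Set.Ioc 0 ((n + 1) * h) ∩ (· + δ) ⁻¹' Set.Ioc 0 ((n + 1) * h), F t (t + δ) ≤ a) :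
    ∫⁻ σ in Set.Ioc 0 h, ∫⁻ t in Set.Ioc 0 ((n + 1) * h), F t (cellIndex n h t * h + σ) ≤
      2 * a * volume (Set.Ioc 0 h) := by
  have hvol : volume (Set.Icc (-h) h) = 2 * volume (Set.Ioc 0 h) := by
    rw [Real.volume_Icc, Real.volume_Ioc, sub_neg_eq_add, sub_zero, ← two_mul,
      ENNReal.ofReal_mul zero_le_two, ENNReal.ofReal_ofNat]
  calc ∫⁻ σ in Set.Ioc 0 h, ∫⁻ t in Set.Ioc 0 ((n + 1) * h), F t (cellIndex n h t * h + σ)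
      ≤ a * volume (Set.Icc (-h) h) :=
        setLIntegral_setLIntegral_add_le measurableSet_Ioc measurableSet_Ioc measurableSet_Icc
          measurable_cellIndex_mul (fun t _ σ hσ => cellIndex_mul_add_mem_Ioc hh hσ)
          (fun t ht σ hσ => cellIndex_mul_sub_add_mem_Icc hh ht hσ) hF hFa
    _ = 2 * a * volume (Set.Ioc 0 h) := by rw [hvol]; ring

lemma exists_setLIntegral_cellIndex_mul_add_le (hh : 0 < h)
    (hF : Measurable (Function.uncurry F)) (hG : Measurable (Function.uncurry G))
    (ha₀ : a ≠ 0) (ha : a ≠ ⊤) (hb₀ : b ≠ 0) (hb : b ≠ ⊤)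
    (hFa : ∀ δ ∈ Set.Icc (-h) h,
      ∫⁻ t in Set.Ioc 0 ((n + 1) * h) ∩ (· + δ) ⁻¹' Set.Ioc 0 ((n + 1) * h), F t (t + δ) ≤ a)
    (hGb : ∀ δ ∈ Set.Icc (-h) h,
      ∫⁻ t in Set.Ioc 0 ((n + 1) * h) ∩ (· + δ) ⁻¹' Set.Ioc 0 ((n + 1) * h), G t (t + δ) ≤ b) :
    ∃ σ, (∫⁻ t in Set.Ioc 0 ((n + 1) * h), F t (cellIndex n h t * h + σ)) ≤ 4 * a ∧
      (∫⁻ t in Set.Ioc 0 ((n + 1) * h), G t (cellIndex n h t * h + σ)) ≤ 4 * b := by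
  obtain ⟨σ, -, hFσ, hGσ⟩ := exists_mem_le_two_mul_and_le_two_mul (by simp [hh]) (by simp)
    (measurable_setLIntegral_cellIndex_mul_add hF) (measurable_setLIntegral_cellIndex_mul_add hG)
    (by simp [ha₀]) (by finiteness) (by simp [hb₀]) (by finiteness)
    (setLIntegral_setLIntegral_cellIndex_mul_add_le hh hF hFa)
    (setLIntegral_setLIntegral_cellIndex_mul_add_le hh hG hGb)
  have htwo : ∀ e : ℝ≥0∞, 2 * (2 * e) = 4 * e := fun e => by ring
  exact ⟨σ, htwo a ▸ hFσ, htwo b ▸ hGσ⟩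

end Cells

section StepApproximation

lemma setLIntegral_inter_preimage_add_le {G : Type*} [MeasurableSpace G] [AddGroup G]
    [MeasurableAdd G] {μ : Measure G} [μ.IsAddRightInvariant] (g : G → ℝ≥0∞) (I : Set G) (δ : G) :
    ∫⁻ t in I ∩ (· + δ) ⁻¹' I, g (t + δ) ∂μ ≤ ∫⁻ t in I, g t ∂μ :=
  calc ∫⁻ t in I ∩ (· + δ) ⁻¹' I, g (t + δ) ∂μ ≤ ∫⁻ t in (· + δ) ⁻¹' I, g (t + δ) ∂μ :=
        lintegral_mono_set Set.inter_subset_right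
    _ = ∫⁻ t in I, g t ∂μ := (measurePreserving_add_right μ δ).setLIntegral_comp_preimage_emb
        (measurableEmbedding_addRight δ) g I

lemma setLIntegral_inter_preimage_add_le_of_symm {G : ℝ → ℝ → ℝ≥0∞} (hG : ∀ t s, G t s = G s t)
    (hG₀ : ∀ t, G t t = 0) {T h : ℝ} {e : ℝ≥0∞}
    (hGe : ∀ δ ∈ Set.Ioc 0 h, ∫⁻ t in Set.Ioc 0 (T - δ), G (t + δ) t ≤ e) {δ : ℝ}
    (hδ : δ ∈ Set.Icc (-h) h) :
    ∫⁻ t in Set.Ioc 0 T ∩ (· + δ) ⁻¹' Set.Ioc 0 T, G t (t + δ) ≤ e := by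
  rcases lt_trichotomy δ 0 with hneg | rfl | hpos
  · have hshift : Set.Ioc 0 T ∩ (· + δ) ⁻¹' Set.Ioc 0 T = (· + δ) ⁻¹' Set.Ioc 0 (T - -δ) := by
      ext t
      simp only [Set.mem_inter_iff, Set.mem_preimage, Set.mem_Ioc]
      grind
    calc ∫⁻ t in Set.Ioc 0 T ∩ (· + δ) ⁻¹' Set.Ioc 0 T, G t (t + δ)
        = ∫⁻ t in (· + δ) ⁻¹' Set.Ioc 0 (T - -δ), G (t + δ + -δ) (t + δ) := by
          simp only [hshift, add_neg_cancel_right]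
      _ = ∫⁻ t in Set.Ioc 0 (T - -δ), G (t + -δ) t :=
          (measurePreserving_add_right volume δ).setLIntegral_comp_preimage_emb
            (measurableEmbedding_addRight δ) (fun t => G (t + -δ) t) _
      _ ≤ e := hGe (-δ) ⟨neg_pos.2 hneg, neg_le.1 hδ.1⟩
  · simp [hG₀]
  · have hsubset : Set.Ioc 0 T ∩ (· + δ) ⁻¹' Set.Ioc 0 T ⊆ Set.Ioc 0 (T - δ) :=
      fun t ht => ⟨ht.1.1, le_sub_iff_add_le.2 ht.2.2⟩
    calc ∫⁻ t in Set.Ioc 0 T ∩ (· + δ) ⁻¹' Set.Ioc 0 T, G t (t + δ)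
        ≤ ∫⁻ t in Set.Ioc 0 (T - δ), G t (t + δ) := lintegral_mono_set hsubset
      _ = ∫⁻ t in Set.Ioc 0 (T - δ), G (t + δ) t := by simp only [hG]
      _ ≤ e := hGe δ ⟨hpos, hδ.2⟩

lemma eLpNorm_le_iff_lintegral_rpow_le {α ε : Type*} [MeasurableSpace α] {μ : Measure α}
    [ENorm ε] {p : ℝ≥0∞} (hp₀ : p ≠ 0) (hp : p ≠ ⊤) {f : α → ε} {c : ℝ≥0∞} :
    eLpNorm f p μ ≤ c ↔ ∫⁻ x, ‖f x‖ₑ ^ p.toReal ∂μ ≤ c ^ p.toReal := by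
  rw [eLpNorm_eq_lintegral_rpow_enorm_toReal hp₀ hp, one_div,
    ENNReal.rpow_inv_le_iff (ENNReal.toReal_pos hp₀ hp)]

lemma mul_rpow_le_rpow_mul {c : ℝ≥0∞} (hc : 1 ≤ c) (x : ℝ≥0∞) {q : ℝ} (hq : 1 ≤ q) :
    c * x ^ q ≤ (c * x) ^ q := by
  rw [ENNReal.mul_rpow_of_nonneg _ _ (zero_le_one.trans hq)]
  gcongr
  exact ENNReal.le_rpow_self_of_one_le hc hq

lemma ae_restrict_Ioc_and_add {P : ℝ → Prop} {T δ : ℝ} (hδ : 0 ≤ δ)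
    (hP : ∀ᵐ t ∂volume.restrict (Set.Ioc 0 T), P t) :
    ∀ᵐ t ∂volume.restrict (Set.Ioc 0 (T - δ)), P t ∧ P (t + δ) := by
  rw [ae_restrict_iff' measurableSet_Ioc] at hP ⊢
  filter_upwards [hP, (quasiMeasurePreserving_add_right volume δ).ae hP] with t ht htδ hmem
  exact ⟨ht ⟨hmem.1, by linarith [hmem.2]⟩, htδ ⟨by linarith [hmem.1], by linarith [hmem.2]⟩⟩

variable {V Y : Type*} [NormedAddCommGroup V] [NormedSpace ℝ V]
  [NormedAddCommGroup Y] [NormedSpace ℝ Y] {L : V →L[ℝ] Y} {p : ℝ≥0∞} [Fact (1 ≤ p)]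
  {n : ℕ} {h : ℝ} {f : ℝ → V} {R r : ℝ≥0∞}

lemma exists_step_approx_of_stronglyMeasurable (hp : p ≠ ⊤) (hh : 0 < h)
    (hf : StronglyMeasurable f)
    (hR₀ : R ≠ 0) (hR : R ≠ ⊤) (hr₀ : r ≠ 0) (hr : r ≠ ⊤)
    (hfR : eLpNorm f p (volume.restrict (Set.Ioc 0 ((n + 1) * h))) ≤ R)
    (hfr : ∀ δ ∈ Set.Ioc 0 h, eLpNorm (fun t => L (f (t + δ)) - L (f t)) p
      (volume.restrict (Set.Ioc 0 ((n + 1) * h - δ))) ≤ r) :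
    ∃ c : Fin (n + 1) → V,
      eLpNorm (c ∘ cellIndex n h) p (volume.restrict (Set.Ioc 0 ((n + 1) * h))) ≤ 4 * R ∧
      eLpNorm (fun t => L (f t) - L (c (cellIndex n h t))) p
        (volume.restrict (Set.Ioc 0 ((n + 1) * h))) ≤ 4 * r := by
  have hp₀ : p ≠ 0 := (zero_lt_one.trans_le Fact.out).ne'
  have hq : 1 ≤ p.toReal := (ENNReal.dichotomy p).resolve_left hp
  simp only [eLpNorm_le_iff_lintegral_rpow_le hp₀ hp] at hfR hfr ⊢
  let F : ℝ → ℝ → ℝ≥0∞ := fun _ s => ‖f s‖ₑ ^ p.toReal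
  let G : ℝ → ℝ → ℝ≥0∞ := fun t s => ‖L (f t) - L (f s)‖ₑ ^ p.toReal
  have hLf : StronglyMeasurable fun t => L (f t) := L.continuous.comp_stronglyMeasurable hf
  have hF : Measurable (Function.uncurry F) := (hf.enorm.comp measurable_snd).pow_const _
  have hG : Measurable (Function.uncurry G) :=
    ((hLf.comp_measurable measurable_fst).sub
      (hLf.comp_measurable measurable_snd)).enorm.pow_const _
  have hG_symm : ∀ t s, G t s = G s t := fun t s => by simp only [G, enorm_sub_rev]
  have hG_diag : ∀ t, G t t = 0 := fun t => by simp [G, zero_lt_one.trans_le hq]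
  obtain ⟨σ, hFσ, hGσ⟩ := exists_setLIntegral_cellIndex_mul_add_le (n := n) hh hF hG
    (a := R ^ p.toReal) (b := r ^ p.toReal) (by simp [hR₀]) (by finiteness) (by simp [hr₀])
    (by finiteness) (fun δ _ => (setLIntegral_inter_preimage_add_le _ _ δ).trans hfR)
    (fun δ hδ => setLIntegral_inter_preimage_add_le_of_symm hG_symm hG_diag hfr hδ)
  have hfour : (1 : ℝ≥0∞) ≤ 4 := by norm_num
  exact ⟨fun i => f (i * h + σ), hFσ.trans (mul_rpow_le_rpow_mul hfour R hq),
    hGσ.trans (mul_rpow_le_rpow_mul hfour r hq)⟩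

lemma exists_step_approx (hp : p ≠ ⊤) (hh : 0 < h)
    (hf : AEStronglyMeasurable f (volume.restrict (Set.Ioc 0 ((n + 1) * h))))
    (hR₀ : R ≠ 0) (hR : R ≠ ⊤) (hr₀ : r ≠ 0) (hr : r ≠ ⊤)
    (hfR : eLpNorm f p (volume.restrict (Set.Ioc 0 ((n + 1) * h))) ≤ R)
    (hfr : ∀ δ ∈ Set.Ioc 0 h, eLpNorm (fun t => L (f (t + δ)) - L (f t)) p
      (volume.restrict (Set.Ioc 0 ((n + 1) * h - δ))) ≤ r) :
    ∃ c : Fin (n + 1) → V,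
      eLpNorm (c ∘ cellIndex n h) p (volume.restrict (Set.Ioc 0 ((n + 1) * h))) ≤ 4 * R ∧
      eLpNorm (fun t => L (f t) - L (c (cellIndex n h t))) p
        (volume.restrict (Set.Ioc 0 ((n + 1) * h))) ≤ 4 * r := by
  have hmk := hf.ae_eq_mk
  have hmk_r : ∀ δ ∈ Set.Ioc 0 h, eLpNorm (fun t => L (hf.mk f (t + δ)) - L (hf.mk f t)) p
      (volume.restrict (Set.Ioc 0 ((n + 1) * h - δ))) ≤ r := fun δ hδ => by
    refine (eLpNorm_congr_ae ?_).trans_le (hfr δ hδ)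
    filter_upwards [ae_restrict_Ioc_and_add hδ.1.le hmk] with t ht
    rw [ht.1, ht.2]
  obtain ⟨c, hcR, hcr⟩ := exists_step_approx_of_stronglyMeasurable hp hh hf.stronglyMeasurable_mk
    hR₀ hR hr₀ hr ((eLpNorm_congr_ae hmk.symm).trans_le hfR) hmk_r
  refine ⟨c, hcR, (eLpNorm_congr_ae ?_).trans_le hcr⟩
  filter_upwards [hmk] with t ht
  rw [ht]

end StepApproximation

section Simon

variable {V H Y : Type*} [NormedAddCommGroup V] [NormedSpace ℝ V] [NormedAddCommGroup H]
  [NormedSpace ℝ H] [NormedAddCommGroup Y] [NormedSpace ℝ Y] {A : V →L[ℝ] H} {B : H →L[ℝ] Y}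
  {p : ℝ≥0∞} [Fact (1 ≤ p)] {T : ℝ} {Γ : Set (ℝ → V)} {R : ℝ≥0∞}

lemma exists_add_one_mul_eq_le (hT : 0 < T) {δ₀ : ℝ} (hδ₀ : 0 < δ₀) :
    ∃ (n : ℕ) (h : ℝ), 0 < h ∧ h ≤ δ₀ ∧ (n + 1) * h = T := by
  obtain ⟨n, hn⟩ := exists_nat_ge (T / δ₀)
  refine ⟨n, T / (n + 1), by positivity, ?_, mul_div_cancel₀ T (by positivity)⟩
  rw [div_le_iff₀ hδ₀] at hn
  rw [div_le_iff₀ (by positivity)]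
  linarith

lemma exists_forall_mem_exists_step_approx (L : V →L[ℝ] Y) (hp : p ≠ ⊤) (hT : 0 < T)
    (hR₀ : R ≠ 0) (hR : R ≠ ⊤)
    (hΓ : ∀ f ∈ Γ, AEStronglyMeasurable f (volume.restrict (Set.Ioc 0 T)))
    (hΓR : ∀ f ∈ Γ, eLpNorm f p (volume.restrict (Set.Ioc 0 T)) ≤ R)
    (hequi : ∀ r > 0, ∃ δ₀ > 0, ∀ δ ∈ Set.Ioc 0 δ₀, ∀ f ∈ Γ,
      eLpNorm (fun t => L (f (t + δ)) - L (f t)) p (volume.restrict (Set.Ioc 0 (T - δ))) ≤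
        ENNReal.ofReal r) {r : ℝ} (hr : 0 < r) :
    ∃ (n : ℕ) (h : ℝ), ∀ f ∈ Γ, ∃ c : Fin (n + 1) → V,
      eLpNorm (c ∘ cellIndex n h) p (volume.restrict (Set.Ioc 0 T)) ≤ 4 * R ∧
      eLpNorm (fun t => L (f t) - L (c (cellIndex n h t))) p (volume.restrict (Set.Ioc 0 T)) ≤
        4 * ENNReal.ofReal r := by
  obtain ⟨δ₀, hδ₀, hδ₀Γ⟩ := hequi r hr
  obtain ⟨n, h, hh, hhδ₀, rfl⟩ := exists_add_one_mul_eq_le hT hδ₀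
  exact ⟨n, h, fun f hf => exists_step_approx hp hh (hΓ f hf) hR₀ hR
    (ENNReal.ofReal_pos.2 hr).ne' ENNReal.ofReal_ne_top (hΓR f hf)
    fun δ hδ => hδ₀Γ δ ⟨hδ.1, hδ.2.trans hhδ₀⟩ f hf⟩

lemma exists_forall_mem_exists_step_approx_of_isCompactOperator (hA : IsCompactOperator A)
    (hB : Function.Injective B) (hp : p ≠ ⊤) (hT : 0 < T) (hR₀ : R ≠ 0) (hR : R ≠ ⊤)
    (hΓ : ∀ f ∈ Γ, AEStronglyMeasurable f (volume.restrict (Set.Ioc 0 T)))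
    (hΓR : ∀ f ∈ Γ, eLpNorm f p (volume.restrict (Set.Ioc 0 T)) ≤ R)
    (hequi : ∀ r > 0, ∃ δ₀ > 0, ∀ δ ∈ Set.Ioc 0 δ₀, ∀ f ∈ Γ,
      eLpNorm (fun t => B (A (f (t + δ))) - B (A (f t))) p (volume.restrict (Set.Ioc 0 (T - δ))) ≤
        ENNReal.ofReal r) {ε : ℝ} (hε : 0 < ε) :
    ∃ (n : ℕ) (h : ℝ), ∀ f ∈ Γ, ∃ c : Fin (n + 1) → V,
      eLpNorm (c ∘ cellIndex n h) p (volume.restrict (Set.Ioc 0 T)) ≤ 4 * R ∧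
      eLpNorm (fun t => A (f t) - A (c (cellIndex n h t))) p (volume.restrict (Set.Ioc 0 T)) ≤
        ENNReal.ofReal ε := by
  have hR_pos : 0 < R.toReal := ENNReal.toReal_pos hR₀ hR
  obtain ⟨C, hC, hAB⟩ := exists_eLpNorm_le_mul_eLpNorm_add_mul_eLpNorm
    (μ := volume.restrict (Set.Ioc 0 T)) (p := p) Fact.out hA hB
    (η := ε / (10 * R.toReal)) (by positivity)
  obtain ⟨n, h, happrox⟩ := exists_forall_mem_exists_step_approx (B.comp A) hp hT hR₀ hR hΓ hΓR
    hequi (r := ε / (8 * C)) (by positivity)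
  refine ⟨n, h, fun f hf => ?_⟩
  obtain ⟨c, hcR, hcr⟩ := happrox f hf
  refine ⟨c, hcR, ?_⟩
  have hc : AEStronglyMeasurable (c ∘ cellIndex n h) (volume.restrict (Set.Ioc 0 T)) :=
    (StronglyMeasurable.of_discrete.comp_measurable measurable_cellIndex).aestronglyMeasurable
  have hfc : eLpNorm (f - c ∘ cellIndex n h) p (volume.restrict (Set.Ioc 0 T)) ≤ 5 * R :=
    calc _ ≤ R + 4 * R := (eLpNorm_sub_le (hΓ f hf) hc Fact.out).trans (add_le_add (hΓR f hf) hcR)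
      _ = 5 * R := by ring
  have hsub := hAB _ ((hΓ f hf).sub hc)
  simp only [Pi.sub_apply, Function.comp_apply, map_sub] at hsub
  calc eLpNorm (fun t => A (f t) - A (c (cellIndex n h t))) p _
      ≤ ENNReal.ofReal (ε / (10 * R.toReal)) * (5 * R) +
          ENNReal.ofReal C * (4 * ENNReal.ofReal (ε / (8 * C))) :=
        hsub.trans (by gcongr; exact hcr)
    _ = ENNReal.ofReal (ε / (10 * R.toReal) * (5 * R.toReal) + C * (4 * (ε / (8 * C)))) := by
        rw [ENNReal.ofReal_add (by positivity) (by positivity)]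
        repeat rw [ENNReal.ofReal_mul (by positivity)]
        simp [ENNReal.ofReal_toReal hR]
    _ = ENNReal.ofReal ε := by
        congr 1
        field_simp
        norm_num

lemma totallyBounded_compLpImage_of_translation (hA : IsCompactOperator A)
    (hB : Function.Injective B) (hp : p ≠ ⊤) (hT : 0 < T) (hR : R ≠ ⊤)
    (hΓ : ∀ f ∈ Γ, AEStronglyMeasurable f (volume.restrict (Set.Ioc 0 T)))
    (hΓR : ∀ f ∈ Γ, eLpNorm f p (volume.restrict (Set.Ioc 0 T)) ≤ R)
    (hequi : ∀ r > 0, ∃ δ₀ > 0, ∀ δ ∈ Set.Ioc 0 δ₀, ∀ f ∈ Γ,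
      eLpNorm (fun t => B (A (f (t + δ))) - B (A (f t))) p (volume.restrict (Set.Ioc 0 (T - δ))) ≤
        ENNReal.ofReal r) :
    TotallyBounded (compLpImage A p (volume.restrict (Set.Ioc 0 T)) Γ) := by
  have hΓR' : ∀ f ∈ Γ, eLpNorm f p (volume.restrict (Set.Ioc 0 T)) ≤ R + 1 :=
    fun f hf => (hΓR f hf).trans le_self_add
  refine totallyBounded_compLpImage_of_approx fun ε hε => ?_
  obtain ⟨n, h, happrox⟩ := exists_forall_mem_exists_step_approx_of_isCompactOperator hA hB hp hT
    (by simp) (by finiteness) hΓ hΓR' hequi hε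
  refine ⟨_, totallyBounded_compLpImage_comp_of_finite hA hp
    (measurable_cellIndex (n := n) (h := h)) (R := 4 * (R + 1)) (by finiteness), fun f hf => ?_⟩
  obtain ⟨c, hcR, hcε⟩ := happrox f hf
  exact ⟨c ∘ cellIndex n h, ⟨c, rfl, hcR⟩,
    memLp_comp_of_finite_s9 measurable_cellIndex fun i => A (c i), hcε⟩

end Simon

lemma eLpNorm_ofReal_le_iff_lintegral_nnnorm_rpow_le {α E : Type*} [MeasurableSpace α]
    {μ : Measure α} [NormedAddCommGroup E] {p : ℝ} (hp : 0 < p) {f : α → E} {c : ℝ≥0∞} :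
    eLpNorm f (ENNReal.ofReal p) μ ≤ c ↔ ∫⁻ t, (‖f t‖₊ : ℝ≥0∞) ^ p ∂μ ≤ c ^ p := by
  rw [eLpNorm_le_iff_lintegral_rpow_le (ENNReal.ofReal_pos.2 hp).ne' ENNReal.ofReal_ne_top,
    ENNReal.toReal_ofReal hp.le]
  rfl

theorem stmt_9_general {V H Yb : Type*}
    [NormedAddCommGroup V] [NormedSpace ℝ V]
    [NormedAddCommGroup H] [NormedSpace ℝ H]
    [NormedAddCommGroup Yb] [NormedSpace ℝ Yb]
    (eVH : V →L[ℝ] H) (hcpt : IsCompactOperator eVH)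
    (eHY : H →L[ℝ] Yb) (heHY : Function.Injective eHY)
    (p : ℝ) [Fact (1 ≤ ENNReal.ofReal p)] (T : ℝ) (hT : 0 < T)
    (Γ : Set (ℝ → V))
    (hmeas : ∀ f ∈ Γ, AEStronglyMeasurable f (volume.restrict (Set.Ioc 0 T)))
    (hbdd : ∃ C : ℝ≥0∞, C < ⊤ ∧ ∀ f ∈ Γ,
      (∫⁻ t in Set.Ioc 0 T, (‖f t‖₊ : ℝ≥0∞) ^ p) ≤ C)
    (hequi : ∀ ε > (0 : ℝ), ∃ δ₀ > (0 : ℝ), ∀ δ : ℝ, 0 < δ → δ ≤ δ₀ → ∀ f ∈ Γ,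
      (∫⁻ t in Set.Ioc 0 (T - δ),
        (‖eHY (eVH (f (t + δ))) - eHY (eVH (f t))‖₊ : ℝ≥0∞) ^ p)
        ≤ ENNReal.ofReal ε) :
    IsCompact (closure {g : Lp H (ENNReal.ofReal p) (volume.restrict (Set.Ioc 0 T)) |
      ∃ f ∈ Γ, ⇑g =ᵐ[volume.restrict (Set.Ioc 0 T)] fun t => eVH (f t)}) := by
  have hp : 0 < p := zero_lt_one.trans_le (ENNReal.one_le_ofReal.1 Fact.out)
  obtain ⟨C, hC, hCΓ⟩ := hbdd
  have hR : C ^ p⁻¹ ≠ ⊤ := ENNReal.rpow_ne_top_of_nonneg (by positivity) hC.ne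
  have hΓR : ∀ f ∈ Γ,
      eLpNorm f (ENNReal.ofReal p) (volume.restrict (Set.Ioc 0 T)) ≤ C ^ p⁻¹ := fun f hf => by
    rw [eLpNorm_ofReal_le_iff_lintegral_nnnorm_rpow_le hp, ENNReal.rpow_inv_rpow hp.ne']
    exact hCΓ f hf
  change IsCompact (closure (compLpImage eVH _ _ Γ))
  refine isCompact_closure_compLpImage_of_totallyBounded hcpt hR hmeas hΓR <|
    totallyBounded_compLpImage_of_translation hcpt heHY ENNReal.ofReal_ne_top hT hR hmeas hΓR
      fun r hr => ?_
  obtain ⟨δ₀, hδ₀, hδ₀Γ⟩ := hequi (r ^ p) (by positivity)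
  refine ⟨δ₀, hδ₀, fun δ hδ f hf => ?_⟩
  rw [eLpNorm_ofReal_le_iff_lintegral_nnnorm_rpow_le hp, ENNReal.ofReal_rpow_of_pos hr]
  exact hδ₀Γ δ hδ.1 hδ.2 f hf

/-- Simon's compactness lemma: given continuous embeddings `V ⊂ H ⊂ Y` with
`V ⊂ H` compact, a bounded subset `Γ` of `L^p(0,T;V)` with
`lim_{δ→0⁺} sup_{f∈Γ} ∫₀^{T−δ} ‖f(t+δ) − f(t)‖_Y^p dt = 0`
is relatively compact in `L^p(0,T;H)`. -/
theorem stmt_9 {V H Yb : Type*}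
    [NormedAddCommGroup V] [NormedSpace ℝ V]
    [NormedAddCommGroup H] [NormedSpace ℝ H]
    [NormedAddCommGroup Yb] [NormedSpace ℝ Yb]
    (eVH : V →L[ℝ] H) (heVH : Function.Injective eVH) (hcpt : IsCompactOperator eVH)
    (eHY : H →L[ℝ] Yb) (heHY : Function.Injective eHY)
    (p : ℝ) (hp : 1 ≤ p) [Fact (1 ≤ ENNReal.ofReal p)] (T : ℝ) (hT : 0 < T)
    (Γ : Set (ℝ → V))
    (hmeas : ∀ f ∈ Γ, AEStronglyMeasurable f (volume.restrict (Set.Ioc (0:ℝ) T)))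
    (hbdd : ∃ C : ℝ≥0∞, C < ⊤ ∧ ∀ f ∈ Γ,
      (∫⁻ t in Set.Ioc (0:ℝ) T, (‖f t‖₊ : ℝ≥0∞) ^ p) ≤ C)
    (hequi : ∀ ε > (0:ℝ), ∃ δ₀ > (0:ℝ), ∀ δ : ℝ, 0 < δ → δ ≤ δ₀ → ∀ f ∈ Γ,
      (∫⁻ t in Set.Ioc (0:ℝ) (T - δ),
        (‖eHY (eVH (f (t + δ))) - eHY (eVH (f t))‖₊ : ℝ≥0∞) ^ p)
        ≤ ENNReal.ofReal ε) :
    IsCompact (closure {g : Lp H (ENNReal.ofReal p) (volume.restrict (Set.Ioc (0:ℝ) T)) |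
      ∃ f ∈ Γ, ⇑g =ᵐ[volume.restrict (Set.Ioc (0:ℝ) T)] fun t => eVH (f t)}) :=
  stmt_9_general eVH hcpt eHY heHY p T hT Γ hmeas hbdd hequi
end
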